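/- arXiv:0705.4253 — 4 statements merged into one kernel-verified Lean document; each statement's English description precedes it below -/
import Mathlib

section
/- Consider a pairwise separable convex program whose objective F is (λ,w)-scaled diagonally dominant, and run the min-sum algorithm with initial messages satisfying the initialization assumption. Then for every t ≥ 0, ‖x^{(t)} − x*‖_∞ ≤ K · (λ^t/(1−λ)) · Σ_{(u,v)∈E⃗} | (J^{(0)}_{u→v})'(x*_v) − ∂f_{uv}/∂x_v(x*_u, x*_v) |. In particular, x^{(t)} → x* as t → ∞. -/
/-- Calculus package for a C² function of two real variables. -/
theorem c2_package (h : ℝ → ℝ → ℝ) : ∃ h1 h2 h11 h12 h22 : ℝ → ℝ → ℝ,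
    ContDiff ℝ 2 (fun q : ℝ × ℝ => h q.1 q.2) →
    (∀ (u v : ℝ → ℝ) (u' v' θ : ℝ), HasDerivAt u u' θ → HasDerivAt v v' θ →
      HasDerivAt (fun s => h (u s) (v s)) (h1 (u θ) (v θ) * u' + h2 (u θ) (v θ) * v') θ ∧
      HasDerivAt (fun s => h1 (u s) (v s)) (h11 (u θ) (v θ) * u' + h12 (u θ) (v θ) * v') θ ∧
      HasDerivAt (fun s => h2 (u s) (v s)) (h12 (u θ) (v θ) * u' + h22 (u θ) (v θ) * v') θ) := by
  set H : ℝ × ℝ → ℝ := fun q => h q.1 q.2 with hH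
  refine ⟨fun a b => fderiv ℝ H (a, b) (1, 0), fun a b => fderiv ℝ H (a, b) (0, 1),
    fun a b => fderiv ℝ (fderiv ℝ H) (a, b) (1, 0) (1, 0),
    fun a b => fderiv ℝ (fderiv ℝ H) (a, b) (1, 0) (0, 1),
    fun a b => fderiv ℝ (fderiv ℝ H) (a, b) (0, 1) (0, 1), ?_⟩
  intro hC u v u' v' θ hu hv
  have hsplit : ((u', v') : ℝ × ℝ) = u' • ((1, 0) : ℝ × ℝ) + v' • ((0, 1) : ℝ × ℝ) := by
    ext <;> simp
  have hcurve : HasDerivAt (fun s => (u s, v s)) (u', v') θ := hu.prodMk hv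
  have hd1 : DifferentiableAt ℝ H (u θ, v θ) := hC.differentiable (by norm_num) _
  have hC1 : ContDiff ℝ 1 (fderiv ℝ H) := hC.fderiv_right (by norm_num)
  have hd2 : DifferentiableAt ℝ (fderiv ℝ H) (u θ, v θ) := hC1.differentiable (by norm_num) _
  have hsymm : IsSymmSndFDerivAt ℝ H (u θ, v θ) :=
    hC.contDiffAt.isSymmSndFDerivAt (by simp)
  have k2 : HasDerivAt (fun s => fderiv ℝ H (u s, v s))
      (fderiv ℝ (fderiv ℝ H) (u θ, v θ) (u', v')) θ :=
    HasFDerivAt.comp_hasDerivAt θ (f := fun s => (u s, v s)) hd2.hasFDerivAt hcurve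
  refine ⟨?_, ?_, ?_⟩
  · have k1 := HasFDerivAt.comp_hasDerivAt θ (f := fun s => (u s, v s)) hd1.hasFDerivAt hcurve
    rw [hsplit, map_add, map_smul, map_smul] at k1
    refine k1.congr_deriv ?_
    simp [mul_comm]
  · have k3 := k2.clm_apply (hasDerivAt_const θ ((1, 0) : ℝ × ℝ))
    refine k3.congr_deriv ?_
    rw [hsplit, map_add, map_smul, map_smul]
    have := hsymm.eq (1, 0) (0, 1)
    simp [this, mul_comm]
  · have k3 := k2.clm_apply (hasDerivAt_const θ ((0, 1) : ℝ × ℝ))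
    refine k3.congr_deriv ?_
    rw [hsplit, map_add, map_smul, map_smul]
    simp [mul_comm]

/-- The final arithmetic step of the node estimate. -/
theorem node_arith (D D' M d R L : ℝ) (hM : 0 < M) (hMD : M ≤ D) (hDD : D ≤ D')
    (hR : 0 ≤ R) (hL : 0 ≤ L) (hd : D' * |d| ≤ R + L * D) : |d| ≤ L + R / M := by
  have hD' : 0 < D' := by linarith
  have h1 : R ≤ R / M * D' := by
    rw [div_mul_eq_mul_div, le_div_iff₀ hM]
    exact mul_le_mul_of_nonneg_left (by linarith) hR
  have h2 : L * D ≤ L * D' := mul_le_mul_of_nonneg_left hDD hL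
  refine le_of_mul_le_mul_left ?_ hD'
  nlinarith

open Filter Finset

/-- Partial derivative of `F : (ι → ℝ) → ℝ` in coordinate `i` at `x`. -/
noncomputable def pd {ι : Type*} [DecidableEq ι] (F : (ι → ℝ) → ℝ) (i : ι) (x : ι → ℝ) : ℝ :=
  deriv (fun y => F (Function.update x i y)) (x i)

/-- Second partial derivative `∂²F/∂x_i∂x_j` of `F : (ι → ℝ) → ℝ` at `x`. -/
noncomputable def pd2 {ι : Type*} [DecidableEq ι] (F : (ι → ℝ) → ℝ) (i j : ι) (x : ι → ℝ) : ℝ :=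
  pd (pd F j) i x

/-- **Convergence of the min-sum algorithm for pairwise separable convex programs**
(Theorem 1 of Moallemi–Van Roy).  For a pairwise separable convex program whose
objective `F` is `(λ, w)`-scaled diagonally dominant, the min-sum estimates satisfy
`‖x⁽ᵗ⁾ - x*‖_∞ ≤ K (λᵗ/(1-λ)) Σ_{(u,v) ∈ E⃗} |(J⁰_{u→v})'(x*_v) - ∂f_{uv}/∂x_v(x*_u, x*_v)|`,
and in particular converge to the unique optimum `x*`. -/
theorem minSum_pairwise_convergence
    {V : Type*} [Fintype V] [DecidableEq V] [Nonempty V]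
    (G : SimpleGraph V) [DecidableRel G.Adj]
    -- the factors of the pairwise separable convex program
    (f : V → ℝ → ℝ) (g : V → V → ℝ → ℝ → ℝ)
    (hf_sconv : ∀ i, StrictConvexOn ℝ Set.univ (f i))
    (hf_coer : ∀ i, Tendsto (f i) (cocompact ℝ) atTop)
    (hf_smooth : ∀ i, ContDiff ℝ 2 (f i))
    (hg_conv : ∀ i j, G.Adj i j → ConvexOn ℝ Set.univ (fun q : ℝ × ℝ => g i j q.1 q.2))
    (hg_smooth : ∀ i j, G.Adj i j → ContDiff ℝ 2 (fun q : ℝ × ℝ => g i j q.1 q.2))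
    (hg_symm : ∀ i j, G.Adj i j → ∀ a b : ℝ, g i j a b = g j i b a)
    -- the objective function
    (F : (V → ℝ) → ℝ)
    (hF : F = fun x => (∑ i, f i (x i)) +
      (1 / 2) * ∑ i, ∑ j ∈ G.neighborFinset i, g i j (x i) (x j))
    -- `M = min_i inf_x ∂²F/∂x_i²(x) > 0`
    (M : ℝ) (hM : 0 < M) (hMle : ∀ (i : V) (x : V → ℝ), M ≤ pd2 F i i x)
    -- the unique optimal solution
    (xstar : V → ℝ) (hxstar : ∀ y, y ≠ xstar → F xstar < F y)
    -- scaled diagonal dominance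
    (lam : ℝ) (w : V → ℝ) (hlam0 : 0 < lam) (hlam1 : lam < 1) (hw : ∀ i, 0 < w i)
    (hdd : ∀ (i : V) (x : V → ℝ),
      ∑ j ∈ univ.erase i, w j * |pd2 F i j x| ≤ lam * w i * pd2 F i i x)
    -- the min-sum messages and their update rule (minima are attained)
    (J : ℕ → V → V → ℝ → ℝ)
    (hJrec : ∀ (t : ℕ) (i j : V), G.Adj i j → ∀ xj : ℝ,
      IsLeast (Set.range fun y : ℝ =>
          f i y + g i j y xj + ∑ u ∈ (G.neighborFinset i).erase j, J t u i y)
        (J (t + 1) i j xj))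
    -- initialization assumption
    (hJ0smooth : ∀ i j, G.Adj i j → ContDiff ℝ 2 (J 0 i j))
    (hJ0conv : ∀ i j, G.Adj i j → ∃ z : ℝ, ∀ xj : ℝ,
      deriv (deriv (fun b => g i j z b)) xj ≤ deriv (deriv (J 0 i j)) xj)
    -- the estimates: unique minimizers of the local objectives `b⁽ᵗ⁾_i`
    (xEst : ℕ → V → ℝ)
    (hxEst : ∀ (t : ℕ) (i : V) (y : ℝ), y ≠ xEst t i →
      f i (xEst t i) + ∑ u ∈ G.neighborFinset i, J t u i (xEst t i) <
        f i y + ∑ u ∈ G.neighborFinset i, J t u i y) :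
    (∀ (t : ℕ) (r : V),
      |xEst t r - xstar r| ≤
        ((1 / M) * (univ.sup' univ_nonempty w / univ.inf' univ_nonempty w)) *
          (lam ^ t / (1 - lam)) *
          ∑ u, ∑ v ∈ G.neighborFinset u,
            |deriv (J 0 u v) (xstar v) - deriv (fun b => g u v (xstar u) b) (xstar v)|) ∧
    ∀ r, Tendsto (fun t => xEst t r) atTop (nhds (xstar r)) := by
  choose g1 g2 g11 g12 g22 hpk using fun i j => c2_package (g i j)
  have hpk' := fun i j (h : G.Adj i j) => hpk i j (hg_smooth i j h)
  -- symmetry relations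
  have hs1 : ∀ i j, G.Adj i j → ∀ a b, g2 j i b a = g1 i j a b := by
    intro i j h a b
    have k1 := (hpk' i j h (fun s => s) (fun _ => b) 1 0 a (hasDerivAt_id a)
      (hasDerivAt_const a b)).1
    have k2 := (hpk' j i h.symm (fun _ => b) (fun s => s) 0 1 a (hasDerivAt_const a b)
      (hasDerivAt_id a)).1
    have he : (fun s => g i j s b) = fun s => g j i b s := by
      funext s; exact hg_symm i j h s b
    rw [he] at k1
    have := k1.unique k2
    simp at this
    exact this.symm
  have hs11 : ∀ i j, G.Adj i j → ∀ a b, g22 j i b a = g11 i j a b := by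
    intro i j h a b
    have k1 := (hpk' i j h (fun s => s) (fun _ => b) 1 0 a (hasDerivAt_id a)
      (hasDerivAt_const a b)).2.1
    have k2 := (hpk' j i h.symm (fun _ => b) (fun s => s) 0 1 a (hasDerivAt_const a b)
      (hasDerivAt_id a)).2.2
    have he : (fun s => g1 i j s b) = fun s => g2 j i b s := by
      funext s; exact (hs1 i j h s b).symm
    rw [he] at k1
    have := k1.unique k2
    simp at this
    exact this.symm
  have hs12 : ∀ i j, G.Adj i j → ∀ a b, g12 j i b a = g12 i j a b := by
    intro i j h a b
    have k1 := (hpk' i j h (fun _ => a) (fun s => s) 0 1 b (hasDerivAt_const b a)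
      (hasDerivAt_id b)).2.1
    have k2 := (hpk' j i h.symm (fun s => s) (fun _ => a) 1 0 b (hasDerivAt_id b)
      (hasDerivAt_const b a)).2.2
    have he : (fun s => g1 i j a s) = fun s => g2 j i s a := by
      funext s; exact (hs1 i j h a s).symm
    rw [he] at k1
    have := k1.unique k2
    simp at this
    exact this.symm
  -- one-variable derivatives
  have hf1 : ∀ i y, HasDerivAt (f i) (deriv (f i) y) y := fun i y =>
    ((hf_smooth i).differentiable (by norm_num) y).hasDerivAt
  have hf2 : ∀ i y, HasDerivAt (deriv (f i)) (deriv (deriv (f i)) y) y := fun i y =>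
    ((ContDiff.differentiable_deriv_two (hf_smooth i)) y).hasDerivAt
  have hJ1 : ∀ i j, G.Adj i j → ∀ y, HasDerivAt (J 0 i j) (deriv (J 0 i j) y) y := fun i j h y =>
    ((hJ0smooth i j h).differentiable (by norm_num) y).hasDerivAt
  have hJ2 : ∀ i j, G.Adj i j → ∀ y,
      HasDerivAt (deriv (J 0 i j)) (deriv (deriv (J 0 i j)) y) y := fun i j h y =>
    ((ContDiff.differentiable_deriv_two (hJ0smooth i j h)) y).hasDerivAt
  have hg2d : ∀ i j, G.Adj i j → ∀ a, deriv (fun b => g i j a b) = fun b => g2 i j a b := by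
    intro i j h a
    funext b
    have := (hpk' i j h (fun _ => a) (fun s => s) 0 1 b (hasDerivAt_const b a)
      (hasDerivAt_id b)).1
    simpa using this.deriv
  have hg22d : ∀ i j, G.Adj i j → ∀ a b,
      deriv (deriv (fun b => g i j a b)) b = g22 i j a b := by
    intro i j h a b
    rw [hg2d i j h a]
    have := (hpk' i j h (fun _ => a) (fun s => s) 0 1 b (hasDerivAt_const b a)
      (hasDerivAt_id b)).2.2
    simpa using this.deriv
  have hg1p : ∀ i j, G.Adj i j → ∀ a b, HasDerivAt (fun s => g i j s b) (g1 i j a b) a := by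
    intro i j h a b
    have := (hpk' i j h (fun s => s) (fun _ => b) 1 0 a (hasDerivAt_id a)
      (hasDerivAt_const a b)).1
    simpa using this
  -- updates
  have hupd : ∀ (x : V → ℝ) (i k : V), HasDerivAt (fun y => Function.update x i y k)
      (if k = i then 1 else 0) (x i) := by
    intro x i k
    by_cases hk : k = i
    · subst hk; simpa using hasDerivAt_id' (x k)
    · simpa [hk, Function.update_of_ne hk] using hasDerivAt_const (x i) (x k)
  have hFd : ∀ (j : V) (x : V → ℝ), HasDerivAt (fun y => F (Function.update x j y))
      (deriv (f j) (x j) + ∑ k ∈ G.neighborFinset j, g1 j k (x j) (x k)) (x j) := by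
    intro j x
    rw [hF]
    have ha : HasDerivAt (fun y => ∑ i, f i (Function.update x j y i))
        (∑ i, deriv (f i) (x i) * (if i = j then 1 else 0)) (x j) := by
      refine HasDerivAt.fun_sum fun i _ => ?_
      refine HasDerivAt.comp (x j) (h₂ := f i) ?_ (hupd x j i)
      simpa using hf1 i (x i)
    have hb : HasDerivAt (fun y => ∑ i, ∑ k ∈ G.neighborFinset i,
          g i k (Function.update x j y i) (Function.update x j y k))
        (∑ i, ∑ k ∈ G.neighborFinset i, (g1 i k (x i) (x k) * (if i = j then 1 else 0)
          + g2 i k (x i) (x k) * (if k = j then 1 else 0))) (x j) := by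
      refine HasDerivAt.fun_sum fun i _ => HasDerivAt.fun_sum fun k hk => ?_
      have := (hpk' i k (by simpa using hk) _ _ _ _ _ (hupd x j i) (hupd x j k)).1
      simpa using this
    refine (ha.add (hb.const_mul (1/2))).congr_deriv ?_
    have e1 : (∑ i, deriv (f i) (x i) * (if i = j then (1:ℝ) else 0)) = deriv (f j) (x j) := by
      simp
    have e2 : (∑ i, ∑ k ∈ G.neighborFinset i, g1 i k (x i) (x k) * (if i = j then (1:ℝ) else 0))
        = ∑ k ∈ G.neighborFinset j, g1 j k (x j) (x k) := by
      rw [Finset.sum_eq_single j]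
      · simp
      · intro b _ hb; simp [hb]
      · simp
    have e3 : (∑ i, ∑ k ∈ G.neighborFinset i, g2 i k (x i) (x k) * (if k = j then (1:ℝ) else 0))
        = ∑ k ∈ G.neighborFinset j, g1 j k (x j) (x k) := by
      have : ∀ i, (∑ k ∈ G.neighborFinset i, g2 i k (x i) (x k) * (if k = j then (1:ℝ) else 0))
          = if i ∈ G.neighborFinset j then g1 j i (x j) (x i) else 0 := by
        intro i
        by_cases h : G.Adj j i
        · rw [Finset.sum_eq_single j]
          · simp [h, hs1 j i h]
          · intro b _ hb; simp [hb]
          · intro hn; exact absurd (by simpa using h.symm) hn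
        · rw [Finset.sum_eq_zero]
          · simp [h]
          · intro k hk
            have : k ≠ j := by
              rintro rfl
              exact h (by simpa using (G.mem_neighborFinset _ _).1 hk |>.symm)
            simp [this]
      rw [Finset.sum_congr rfl fun i _ => this i, Finset.sum_ite_mem, Finset.univ_inter]
    simp only [Finset.sum_add_distrib]
    rw [e1, e2, e3]
    ring
  have hpd : ∀ j, pd F j = fun x =>
      deriv (f j) (x j) + ∑ k ∈ G.neighborFinset j, g1 j k (x j) (x k) := by
    intro j; funext x; exact (hFd j x).deriv
  have hpd2 : ∀ i j x, pd2 F i j x = deriv (deriv (f j)) (x j) * (if j = i then 1 else 0) +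
      ∑ k ∈ G.neighborFinset j, (g11 j k (x j) (x k) * (if j = i then 1 else 0)
          + g12 j k (x j) (x k) * (if k = i then 1 else 0)) := by
    intro i j x
    unfold pd2
    rw [hpd j]
    unfold pd
    refine HasDerivAt.deriv ?_
    refine HasDerivAt.add ?_ (HasDerivAt.fun_sum fun k hk => ?_)
    · refine HasDerivAt.comp (x i) (h₂ := deriv (f j)) ?_ (hupd x i j)
      simpa using hf2 j (x j)
    · have := (hpk' j k (by simpa using hk) _ _ _ _ _ (hupd x i j) (hupd x i k)).2.1
      simpa using this
  have hpdii : ∀ i x, pd2 F i i x =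
      deriv (deriv (f i)) (x i) + ∑ k ∈ G.neighborFinset i, g11 i k (x i) (x k) := by
    intro i x
    rw [hpd2]
    simp only [if_true, mul_one]
    congr 1
    refine Finset.sum_congr rfl fun k hk => ?_
    have : k ≠ i := by
      rintro rfl
      exact G.irrefl ((G.mem_neighborFinset _ _).1 hk)
    simp [this]
  have hpdij : ∀ i j x, G.Adj i j → pd2 F i j x = g12 i j (x i) (x j) := by
    intro i j x h
    rw [hpd2, ← hs12 i j h]
    have hne : j ≠ i := h.ne'
    simp only [hne, if_false, mul_zero, zero_add]
    rw [Finset.sum_eq_single i]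
    · simp
    · intro b _ hb; simp [hb]
    · intro hn; exact absurd (by simpa using h.symm) hn
  have hdd' : ∀ (i : V) (x : V → ℝ),
      ∑ j ∈ G.neighborFinset i, w j * |g12 i j (x i) (x j)| ≤ lam * w i *
        (deriv (deriv (f i)) (x i) + ∑ k ∈ G.neighborFinset i, g11 i k (x i) (x k)) := by
    intro i x
    rw [← hpdii]
    refine le_trans ?_ (hdd i x)
    rw [Finset.sum_congr rfl (g := fun j => w j * |pd2 F i j x|)]
    · refine Finset.sum_le_sum_of_subset_of_nonneg ?_ ?_
      · intro k hk
        have := (G.mem_neighborFinset _ _).1 hk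
        simp [this.ne']
      · intro k _ _
        exact mul_nonneg (hw k).le (abs_nonneg _)
    · intro j hj
      rw [hpdij i j x (by simpa using hj)]
  have hMle' : ∀ (i : V) (x : V → ℝ), M ≤
        (deriv (deriv (f i)) (x i) + ∑ k ∈ G.neighborFinset i, g11 i k (x i) (x k)) := by
    intro i x
    rw [← hpdii]
    exact hMle i x
  have hopt : ∀ i, deriv (f i) (xstar i) +
      ∑ k ∈ G.neighborFinset i, g1 i k (xstar i) (xstar k) = 0 := by
    intro i
    refine IsLocalMin.hasDerivAt_eq_zero ?_ (hFd i xstar)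
    refine Filter.Eventually.of_forall fun y => ?_
    simp only [Function.update_eq_self]
    by_cases h : Function.update xstar i y = xstar
    · rw [h]
    · exact (hxstar _ h).le
  choose z hz using hJ0conv
  -- the node estimate
  have hnode : ∀ (i : V) (A : Finset V), A ⊆ G.neighborFinset i → ∀ (X : V → ℝ) (y E : ℝ), 0 ≤ E →
      (∀ k ∈ A, |X k - xstar k| ≤ w k * E) →
      deriv (f i) y + ∑ k ∈ A, g1 i k y (X k)
        + ∑ k ∈ G.neighborFinset i \ A, deriv (J 0 k i) y = 0 →
      |y - xstar i| ≤ lam * w i * E + (∑ k ∈ G.neighborFinset i \ A,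
        |deriv (J 0 k i) (xstar i) - deriv (fun b => g k i (xstar k) b) (xstar i)|) / M := by
    intro i A hA X y E hE hX hy
    have hadj : ∀ k ∈ G.neighborFinset i, G.Adj i k := fun k hk => by simpa using hk
    have hadjA : ∀ k ∈ A, G.Adj i k := fun k hk => hadj k (hA hk)
    have hadjB : ∀ k ∈ G.neighborFinset i \ A, G.Adj i k := fun k hk =>
      hadj k (Finset.mem_sdiff.1 hk).1
    have hline : ∀ a b θ : ℝ, HasDerivAt (fun s => a + s * (b - a)) (b - a) θ := by
      intro a b θ
      simpa using ((hasDerivAt_id θ).mul_const (b - a)).const_add a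
    set u : ℝ → ℝ := fun s => xstar i + s * (y - xstar i) with hu
    set v : V → ℝ → ℝ := fun k s => xstar k + s * (X k - xstar k) with hv
    have hψ : ∀ θ, HasDerivAt (fun s => deriv (f i) (u s) + ∑ k ∈ A, g1 i k (u s) (v k s)
        + ∑ k ∈ G.neighborFinset i \ A, deriv (J 0 k i) (u s))
        (deriv (deriv (f i)) (u θ) * (y - xstar i) + ∑ k ∈ A, (g11 i k (u θ) (v k θ) * (y - xstar i)
          + g12 i k (u θ) (v k θ) * (X k - xstar k))
        + ∑ k ∈ G.neighborFinset i \ A, deriv (deriv (J 0 k i)) (u θ) * (y - xstar i)) θ := by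
      intro θ
      refine HasDerivAt.add (HasDerivAt.add ?_ (HasDerivAt.fun_sum fun k hk => ?_))
        (HasDerivAt.fun_sum fun k hk => ?_)
      · exact HasDerivAt.comp θ (h₂ := deriv (f i)) (hf2 i (u θ)) (hline _ _ θ)
      · exact (hpk' i k (hadjA k hk) u (v k) _ _ θ (hline _ _ θ) (hline _ _ θ)).2.1
      · exact HasDerivAt.comp θ (h₂ := deriv (J 0 k i)) (hJ2 k i (hadjB k hk).symm (u θ))
          (hline _ _ θ)
    obtain ⟨θ, -, hθ⟩ := exists_hasDerivAt_eq_slope _ _ (zero_lt_one (α := ℝ))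
      (fun s _ => (hψ s).continuousAt.continuousWithinAt) (fun s _ => hψ s)
    have hu1 : u 1 = y := by simp [hu]
    have hv1 : ∀ k, v k 1 = X k := by intro k; simp [hv]
    have hu0 : u 0 = xstar i := by simp [hu]
    have hv0 : ∀ k, v k 0 = xstar k := by intro k; simp [hv]
    simp only [hu1, hv1, hu0, hv0, hy, sub_zero, div_one, zero_sub] at hθ
    have hδ : deriv (f i) (xstar i) + ∑ k ∈ A, g1 i k (xstar i) (xstar k)
        + ∑ k ∈ G.neighborFinset i \ A, deriv (J 0 k i) (xstar i)
        = ∑ k ∈ G.neighborFinset i \ A,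
        (deriv (J 0 k i) (xstar i) - deriv (fun b => g k i (xstar k) b) (xstar i)) := by
      have e := hopt i
      rw [← Finset.sum_sdiff hA] at e
      have e2 : ∑ k ∈ G.neighborFinset i \ A, deriv (fun b => g k i (xstar k) b) (xstar i)
          = ∑ k ∈ G.neighborFinset i \ A, g1 i k (xstar i) (xstar k) := by
        refine Finset.sum_congr rfl fun k hk => ?_
        rw [hg2d k i (hadjB k hk).symm, ← hs1 i k (hadjB k hk)]
      rw [Finset.sum_sub_distrib, e2]
      linarith
    rw [hδ] at hθ
    set R := ∑ k ∈ G.neighborFinset i \ A,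
        |deriv (J 0 k i) (xstar i) - deriv (fun b => g k i (xstar k) b) (xstar i)| with hR
    have hRle := Finset.abs_sum_le_sum_abs (fun k =>
      deriv (J 0 k i) (xstar i) - deriv (fun b => g k i (xstar k) b) (xstar i))
      (G.neighborFinset i \ A)
    classical
    -- the comparison configuration
    set Z : V → ℝ := fun k => if k = i then u θ else if k ∈ A then v k θ else
      if h : G.Adj k i then z k i h else 0 with hZ
    have hZi : Z i = u θ := by simp [hZ]
    have hZA : ∀ k ∈ A, Z k = v k θ := by
      intro k hk
      simp [hZ, hk, (hadjA k hk).ne']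
    have hZB : ∀ k ∈ G.neighborFinset i \ A,
        g11 i k (u θ) (Z k) ≤ deriv (deriv (J 0 k i)) (u θ) := by
      intro k hk
      have h1 := hadjB k hk
      have : Z k = z k i h1.symm := by
        simp [hZ, (Finset.mem_sdiff.1 hk).2, h1.ne', h1.symm]
      rw [this, ← hs11 i k h1, ← hg22d k i h1.symm]
      exact hz k i h1.symm (u θ)
    have hddZ := hdd' i Z
    have hMZ := hMle' i Z
    rw [hZi] at hddZ hMZ
    set D := deriv (deriv (f i)) (u θ) + ∑ k ∈ G.neighborFinset i, g11 i k (u θ) (Z k) with hD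
    set D' := deriv (deriv (f i)) (u θ) + ∑ k ∈ A, g11 i k (u θ) (v k θ)
      + ∑ k ∈ G.neighborFinset i \ A, deriv (deriv (J 0 k i)) (u θ) with hD'
    have hDD : D ≤ D' := by
      rw [hD, hD', ← Finset.sum_sdiff hA]
      have e1 := Finset.sum_le_sum hZB
      have e2 : ∑ k ∈ A, g11 i k (u θ) (Z k) = ∑ k ∈ A, g11 i k (u θ) (v k θ) :=
        Finset.sum_congr rfl fun k hk => by rw [hZA k hk]
      linarith
    have hL : 0 ≤ lam * w i * E := mul_nonneg (mul_nonneg hlam0.le (hw i).le) hE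
    refine node_arith D D' M _ R _ hM hMZ hDD (Finset.sum_nonneg fun _ _ => abs_nonneg _) hL ?_
    have hcross : |∑ k ∈ A, g12 i k (u θ) (v k θ) * (X k - xstar k)| ≤ lam * w i * E * D := by
      calc |∑ k ∈ A, g12 i k (u θ) (v k θ) * (X k - xstar k)|
          ≤ ∑ k ∈ A, |g12 i k (u θ) (v k θ) * (X k - xstar k)| := Finset.abs_sum_le_sum_abs _ _
        _ ≤ ∑ k ∈ A, w k * |g12 i k (u θ) (Z k)| * E := by
            refine Finset.sum_le_sum fun k hk => ?_
            rw [hZA k hk, abs_mul]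
            have := mul_le_mul_of_nonneg_left (hX k hk) (abs_nonneg (g12 i k (u θ) (v k θ)))
            linarith
        _ ≤ ∑ k ∈ G.neighborFinset i, w k * |g12 i k (u θ) (Z k)| * E :=
            Finset.sum_le_sum_of_subset_of_nonneg hA fun k _ _ =>
              mul_nonneg (mul_nonneg (hw k).le (abs_nonneg _)) hE
        _ = (∑ k ∈ G.neighborFinset i, w k * |g12 i k (u θ) (Z k)|) * E := by
            rw [Finset.sum_mul]
        _ ≤ lam * w i * D * E := mul_le_mul_of_nonneg_right hddZ hE
        _ = lam * w i * E * D := by ring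
    have hD'pos : 0 < D' := by linarith
    have key : D' * (y - xstar i) = -(∑ k ∈ G.neighborFinset i \ A,
        (deriv (J 0 k i) (xstar i) - deriv (fun b => g k i (xstar k) b) (xstar i)))
        - ∑ k ∈ A, g12 i k (u θ) (v k θ) * (X k - xstar k) := by
      rw [Finset.sum_add_distrib, ← Finset.sum_mul, ← Finset.sum_mul] at hθ
      rw [← hθ, hD']
      ring
    calc D' * |y - xstar i| = |D' * (y - xstar i)| := by rw [abs_mul, abs_of_pos hD'pos]
      _ ≤ R + lam * w i * E * D := by
        rw [key]
        refine (abs_sub _ _).trans ?_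
        rw [abs_neg]
        linarith
  -- constants
  set S := ∑ u, ∑ v ∈ G.neighborFinset u,
    |deriv (J 0 u v) (xstar v) - deriv (fun b => g u v (xstar u) b) (xstar v)| with hS
  have hS0 : 0 ≤ S := Finset.sum_nonneg fun _ _ => Finset.sum_nonneg fun _ _ => abs_nonneg _
  have hRS : ∀ (i : V) (A : Finset V), ∑ k ∈ G.neighborFinset i \ A,
      |deriv (J 0 k i) (xstar i) - deriv (fun b => g k i (xstar k) b) (xstar i)| ≤ S := by
    intro i A
    calc _ ≤ ∑ k ∈ G.neighborFinset i \ A, ∑ v ∈ G.neighborFinset k,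
          |deriv (J 0 k v) (xstar v) - deriv (fun b => g k v (xstar k) b) (xstar v)| := by
          refine Finset.sum_le_sum fun k hk => ?_
          have h1 : i ∈ G.neighborFinset k := by
            have := (G.mem_neighborFinset _ _).1 (Finset.mem_sdiff.1 hk).1
            simpa using this.symm
          exact Finset.single_le_sum (f := fun v => |deriv (J 0 k v) (xstar v) -
            deriv (fun b => g k v (xstar k) b) (xstar v)|) (fun _ _ => abs_nonneg _) h1
      _ ≤ S := Finset.sum_le_sum_of_subset_of_nonneg (Finset.subset_univ _)
          fun _ _ _ => Finset.sum_nonneg fun _ _ => abs_nonneg _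
  set m := univ.inf' univ_nonempty w with hm
  have hm0 : 0 < m := (Finset.lt_inf'_iff _).2 fun i _ => hw i
  have hmle : ∀ i, m ≤ w i := fun i => Finset.inf'_le _ (Finset.mem_univ i)
  have hlam : 0 < 1 - lam := by linarith
  set C := S / M / m / (1 - lam) with hC
  have hC0 : 0 ≤ C := by positivity
  have hCw : ∀ i, S / M ≤ w i * ((1 - lam) * C) := by
    intro i
    have : (1 - lam) * C = S / M / m := by rw [hC]; field_simp
    rw [this]
    calc S / M = m * (S / M / m) := by field_simp
      _ ≤ w i * (S / M / m) := mul_le_mul_of_nonneg_right (hmle i) (by positivity)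
  -- the main induction along the computation tree
  have main : ∀ (t : ℕ) (i : V) (P : Finset V), P ⊆ G.neighborFinset i → ∀ (X : V → ℝ) (y E : ℝ),
      (∀ y', f i y + ∑ k ∈ P, g i k y (X k) + ∑ k ∈ G.neighborFinset i \ P, J t k i y ≤
        f i y' + ∑ k ∈ P, g i k y' (X k) + ∑ k ∈ G.neighborFinset i \ P, J t k i y') →
      (∀ k ∈ P, |X k - xstar k| ≤ w k * E) → lam ^ t * C ≤ E → |y - xstar i| ≤ w i * E := by
    intro t
    induction t with
    | zero =>
      intro i P hP X y E hmin hX hE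
      have hE0 : 0 ≤ E := by simp at hE; linarith
      have hst : deriv (f i) y + ∑ k ∈ P, g1 i k y (X k)
          + ∑ k ∈ G.neighborFinset i \ P, deriv (J 0 k i) y = 0 := by
        refine IsLocalMin.hasDerivAt_eq_zero (f := fun y => f i y + ∑ k ∈ P, g i k y (X k) +
          ∑ k ∈ G.neighborFinset i \ P, J 0 k i y) (Filter.Eventually.of_forall hmin) ?_
        refine HasDerivAt.add (HasDerivAt.add (hf1 i y) (HasDerivAt.fun_sum fun k hk => ?_))
          (HasDerivAt.fun_sum fun k hk => ?_)
        · exact hg1p i k (by simpa using hP hk) y (X k)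
        · have := (G.mem_neighborFinset _ _).1 (Finset.mem_sdiff.1 hk).1
          exact hJ1 k i this.symm y
      have h1 := hnode i P hP X y E hE0 hX hst
      have h2 := div_le_div_of_nonneg_right (hRS i P) hM.le
      have h3 := hCw i
      have h4 : w i * ((1 - lam) * C) ≤ w i * ((1 - lam) * E) :=
        mul_le_mul_of_nonneg_left (mul_le_mul_of_nonneg_left (by simpa using hE) hlam.le) (hw i).le
      nlinarith
    | succ t ih =>
      intro i P hP X y E hmin hX hE
      have hE0 : 0 ≤ E := le_trans (by positivity) hE
      have hch : ∀ k, ∃ c, k ∈ G.neighborFinset i →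
          f k c + g k i c y + ∑ u ∈ (G.neighborFinset k).erase i, J t u k c = J (t+1) k i y := by
        intro k
        by_cases hk : k ∈ G.neighborFinset i
        · obtain ⟨c, hc⟩ := (hJrec t k i (by simpa using ((G.mem_neighborFinset _ _).1 hk).symm) y).1
          exact ⟨c, fun _ => hc⟩
        · exact ⟨0, fun h => absurd h hk⟩
      choose c hc using hch
      classical
      set X' : V → ℝ := fun k => if k ∈ P then X k else c k with hX'
      have hXP : ∀ k ∈ P, X' k = X k := fun k hk => by simp [hX', hk]
      have hXB : ∀ k ∈ G.neighborFinset i \ P, X' k = c k := fun k hk => by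
        simp [hX', (Finset.mem_sdiff.1 hk).2]
      have hst : deriv (f i) y + ∑ k ∈ G.neighborFinset i, g1 i k y (X' k) = 0 := by
        refine IsLocalMin.hasDerivAt_eq_zero (a := y) (f := fun y => f i y +
          ∑ k ∈ G.neighborFinset i, g i k y (X' k)) (Filter.Eventually.of_forall fun y' => ?_) ?_
        · have h1 := hmin y'
          have e : ∀ s, ∑ k ∈ G.neighborFinset i, g i k s (X' k)
              = ∑ k ∈ G.neighborFinset i \ P, g k i (c k) s + ∑ k ∈ P, g i k s (X k) := by
            intro s
            rw [← Finset.sum_sdiff hP]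
            congr 1
            · refine Finset.sum_congr rfl fun k hk => ?_
              rw [hXB k hk]
              exact hg_symm i k (by simpa using (Finset.mem_sdiff.1 hk).1) _ _
            · exact Finset.sum_congr rfl fun k hk => by rw [hXP k hk]
          have h2 : ∑ k ∈ G.neighborFinset i \ P, (J (t+1) k i y' - J (t+1) k i y) ≤
              ∑ k ∈ G.neighborFinset i \ P, (g k i (c k) y' - g k i (c k) y) := by
            refine Finset.sum_le_sum fun k hk => ?_
            have hk' := (Finset.mem_sdiff.1 hk).1
            have h3 := (hJrec t k i (by simpa using ((G.mem_neighborFinset _ _).1 hk').symm) y').2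
              ⟨c k, rfl⟩
            have h4 := hc k hk'
            simp only at h3
            linarith
          rw [Finset.sum_sub_distrib, Finset.sum_sub_distrib] at h2
          simp only [e]
          linarith
        · refine HasDerivAt.add (hf1 i y) (HasDerivAt.fun_sum fun k hk => ?_)
          exact hg1p i k (by simpa using hk) y (X' k)
      set E' := max (|y - xstar i| / w i) (lam ^ t * C) with hE'
      have hchild : ∀ k ∈ G.neighborFinset i, |c k - xstar k| ≤ w k * E' := by
        intro k hk
        have hadj : G.Adj k i := by simpa using ((G.mem_neighborFinset _ _).1 hk).symm
        refine ih k {i} (by simpa using hadj) (fun _ => y) (c k) E' ?_ ?_ (le_max_right _ _)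
        · intro y'
          have h3 := (hJrec t k i hadj y).2 ⟨y', rfl⟩
          rw [← hc k hk] at h3
          simpa [Finset.sdiff_singleton_eq_erase] using h3
        · intro k' hk'
          rw [Finset.mem_singleton] at hk'
          subst hk'
          have := mul_le_mul_of_nonneg_left (le_max_left (|y - xstar k'| / w k') (lam ^ t * C))
            (hw k').le
          rwa [mul_div_cancel₀ _ (hw k').ne'] at this
      have h1 := hnode i (G.neighborFinset i) (Finset.Subset.refl _) X' y (max E E')
        (le_max_of_le_left hE0) (by
          intro k hk
          by_cases hkP : k ∈ P
          · rw [hXP k hkP]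
            exact (hX k hkP).trans (mul_le_mul_of_nonneg_left (le_max_left _ _) (hw k).le)
          · rw [hXB k (Finset.mem_sdiff.2 ⟨hk, hkP⟩)]
            exact (hchild k hk).trans (mul_le_mul_of_nonneg_left (le_max_right _ _) (hw k).le))
        (by simpa using hst)
      simp only [Finset.sdiff_self, Finset.sum_empty, zero_div, add_zero] at h1
      set e := |y - xstar i| / w i with he
      have hye : |y - xstar i| = w i * e := by rw [he, mul_div_cancel₀ _ (hw i).ne']
      rw [hye] at h1 ⊢
      refine mul_le_mul_of_nonneg_left ?_ (hw i).le
      have h2 : e ≤ lam * max E E' := by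
        refine le_of_mul_le_mul_left ?_ (hw i)
        linarith
      rw [pow_succ] at hE
      rcases max_choice E E' with h | h
      · rw [h] at h2
        nlinarith
      · rw [h] at h2
        rcases max_choice e (lam ^ t * C) with h' | h'
        · rw [hE', h'] at h2
          nlinarith
        · rw [hE', h'] at h2
          nlinarith
  have hbound : ∀ (t : ℕ) (r : V), |xEst t r - xstar r| ≤
        ((1 / M) * (univ.sup' univ_nonempty w / m)) * (lam ^ t / (1 - lam)) * S := by
    intro t r
    have h1 := main t r ∅ (Finset.empty_subset _) xstar (xEst t r) (lam ^ t * C) (by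
      intro y'
      simp only [Finset.sum_empty, add_zero, Finset.sdiff_empty]
      by_cases h : y' = xEst t r
      · rw [h]
      · exact (hxEst t r y' h).le) (by simp) le_rfl
    refine h1.trans ?_
    have h2 : w r ≤ univ.sup' univ_nonempty w := Finset.le_sup' w (Finset.mem_univ r)
    calc w r * (lam ^ t * C) ≤ univ.sup' univ_nonempty w * (lam ^ t * C) :=
          mul_le_mul_of_nonneg_right h2 (by positivity)
      _ = _ := by rw [hC]; field_simp
  refine ⟨hbound, fun r => ?_⟩
  rw [tendsto_iff_dist_tendsto_zero]
  refine squeeze_zero (fun _ => dist_nonneg) (fun t => (Real.dist_eq _ _).trans_le (hbound t r)) ?_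
  have h0 := tendsto_pow_atTop_nhds_zero_of_lt_one hlam0.le hlam1
  have := ((h0.div_const (1 - lam)).const_mul
    ((1 / M) * (univ.sup' univ_nonempty w / m))).mul_const S
  simpa using this
end

section
/- Consider a pairwise separable convex program whose objective F is (λ,w)-scaled diagonally dominant, with initial messages satisfying the initialization assumption. Fix r ∈ V and t ≥ 0, and let 𝒯 = (𝒱,ℰ), σ, and F_𝒯 be the associated computation tree rooted at r with depth t and its objective. Then F_𝒯 is (λ, w∘σ)-scaled diagonally dominant: for each i ∈ 𝒱 and all x ∈ ℝ^𝒱, Σ_{u∈𝒱∖{i}} w_{σ_u} |∂²F_𝒯/∂x_i∂x_u(x)| ≤ λ w_{σ_i} ∂²F_𝒯/∂x_i²(x). -/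
open Filter Finset

/-- Vertices of the depth-`t` computation tree: a vertex is a walk from the root,
encoded by its length `k ≤ t` and the sequence of vertices visited after the root. -/
abbrev TVert (V : Type*) (t : ℕ) : Type _ := (k : Fin (t + 1)) × (Fin k.1 → V)

/-- The vertex of the original graph at position `m` along the walk `a`
(position `0` is the root `r`). -/
def walkAt {V : Type*} {t : ℕ} (r : V) (a : TVert V t) (m : ℕ) : V :=
  if h : 1 ≤ m ∧ m ≤ a.1.1 then a.2 ⟨m - 1, by omega⟩ else r

/-- The label `σ` of a computation-tree vertex: the final vertex of the walk. -/
def sigTV {V : Type*} {t : ℕ} (r : V) (a : TVert V t) : V := walkAt r a a.1.1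

/-- The parent of a computation-tree vertex (the root is its own parent). -/
def parTV {V : Type*} {t : ℕ} (a : TVert V t) : TVert V t :=
  ⟨⟨a.1.1 - 1, by have := a.1.isLt; omega⟩,
    fun m => a.2 ⟨m.1, lt_of_lt_of_le m.isLt (Nat.sub_le _ _)⟩⟩

/-- The set of vertices of the computation tree rooted at `r` of depth `t`:
non-backtracking walks in `G` starting at `r` of length at most `t`.  (The two
conditions say that consecutive vertices are adjacent and that
`walkAt a m ≠ walkAt a (m+2)` whenever `m + 2 ≤ length`.) -/
def validSet {V : Type*} [Fintype V] [DecidableEq V] (G : SimpleGraph V) [DecidableRel G.Adj]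
    (r : V) (t : ℕ) : Finset (TVert V t) :=
  univ.filter (fun a =>
    (∀ m, m < a.1.1 → G.Adj (walkAt r a m) (walkAt r a (m + 1))) ∧
    (∀ m, m < a.1.1 - 1 → walkAt r a m ≠ walkAt r a (m + 2)))


section Helpers

lemma pd_eq_fderiv {ι : Type*} [Fintype ι] [DecidableEq ι] {F : (ι → ℝ) → ℝ}
    (hF : ContDiff ℝ 1 F) (i : ι) (x : ι → ℝ) :
    pd F i x = fderiv ℝ F x (Pi.single i 1) := by
  unfold pd
  have h1 : HasFDerivAt F (fderiv ℝ F x) (Function.update x i (x i)) := by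
    rw [Function.update_eq_self]
    exact ((hF.differentiable one_ne_zero) x).hasFDerivAt
  exact (h1.comp_hasDerivAt (x i) (hasDerivAt_update x i (x i))).deriv

lemma pd_contDiff {ι : Type*} [Fintype ι] [DecidableEq ι] {F : (ι → ℝ) → ℝ}
    (hF : ContDiff ℝ 2 F) (i : ι) : ContDiff ℝ 1 (pd F i) := by
  have h : pd F i = fun x => fderiv ℝ F x (Pi.single i 1) := by
    funext x
    exact pd_eq_fderiv (hF.of_le (by norm_num)) i x
  rw [h]
  exact (hF.fderiv_right (m := 1) (by norm_num)).clm_apply contDiff_const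

lemma pd_add {ι : Type*} [Fintype ι] [DecidableEq ι] {F H : (ι → ℝ) → ℝ}
    (hF : ContDiff ℝ 1 F) (hH : ContDiff ℝ 1 H) (i : ι) (x : ι → ℝ) :
    pd (fun x => F x + H x) i x = pd F i x + pd H i x := by
  rw [pd_eq_fderiv (hF.add hH), pd_eq_fderiv hF, pd_eq_fderiv hH,
    fderiv_fun_add ((hF.differentiable one_ne_zero) x) ((hH.differentiable one_ne_zero) x)]
  rfl

lemma pd2_add {ι : Type*} [Fintype ι] [DecidableEq ι] {F H : (ι → ℝ) → ℝ}
    (hF : ContDiff ℝ 2 F) (hH : ContDiff ℝ 2 H) (i j : ι) (x : ι → ℝ) :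
    pd2 (fun x => F x + H x) i j x = pd2 F i j x + pd2 H i j x := by
  unfold pd2
  have h : pd (fun x => F x + H x) j = fun x => pd F j x + pd H j x := by
    funext x
    exact pd_add (hF.of_le (by norm_num)) (hH.of_le (by norm_num)) j x
  rw [h, pd_add (pd_contDiff hF j) (pd_contDiff hH j)]

lemma pd2_zero {ι : Type*} [DecidableEq ι] (i j : ι) (x : ι → ℝ) :
    pd2 (fun _ => (0 : ℝ)) i j x = 0 := by
  simp [pd2, pd]

lemma pd2_const_mul {ι : Type*} [DecidableEq ι] (c : ℝ) (F : (ι → ℝ) → ℝ) (i j : ι)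
    (x : ι → ℝ) : pd2 (fun x => c * F x) i j x = c * pd2 F i j x := by
  have h (F : (ι → ℝ) → ℝ) (i : ι) : pd (fun x => c * F x) i = fun x => c * pd F i x := by
    funext x
    simp [pd]
  unfold pd2
  rw [h, h]

lemma pd2_sum {ι κ : Type*} [Fintype ι] [DecidableEq ι] (s : Finset κ)
    (H : κ → (ι → ℝ) → ℝ) (hH : ∀ k ∈ s, ContDiff ℝ 2 (H k)) (i j : ι) (x : ι → ℝ) :
    pd2 (fun x => ∑ k ∈ s, H k x) i j x = ∑ k ∈ s, pd2 (H k) i j x := by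
  classical
  induction s using Finset.induction_on with
  | empty => simp [pd2_zero]
  | insert a s ha ih =>
    simp only [Finset.sum_insert ha]
    rw [pd2_add (hH a (by simp)) (ContDiff.sum fun k hk => hH k (by simp [hk])), ih]
    intro k hk
    exact hH k (by simp [hk])

lemma pd2_single {ι : Type*} [DecidableEq ι] (φ : ℝ → ℝ) (a i j : ι) (x : ι → ℝ) :
    pd2 (fun x => φ (x a)) i j x =
      if i = a ∧ j = a then deriv (deriv φ) (x a) else 0 := by
  unfold pd2
  by_cases hj : j = a
  · subst hj
    have h : pd (fun x : ι → ℝ => φ (x j)) j = fun x => deriv φ (x j) := by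
      funext x
      simp [pd]
    rw [h]
    by_cases hi : i = j
    · subst hi
      simp [pd]
    · simp [pd, hi, Function.update_of_ne (Ne.symm hi)]
  · have h : pd (fun x : ι → ℝ => φ (x a)) j = fun x => 0 := by
      funext x
      simp [pd, Function.update_of_ne (Ne.symm hj)]
    rw [h]
    simp [pd, hj]

/-- second derivative in the first argument -/
noncomputable def dd1 (ψ : ℝ → ℝ → ℝ) (s t : ℝ) : ℝ := deriv (deriv (fun s => ψ s t)) s

/-- mixed second derivative -/
noncomputable def ddm (ψ : ℝ → ℝ → ℝ) (s t : ℝ) : ℝ :=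
  deriv (fun s => deriv (fun t => ψ s t) t) s

lemma pd2_edge {ι : Type*} [DecidableEq ι] (ψ ψ' : ℝ → ℝ → ℝ)
    (hs : ∀ s t, ψ s t = ψ' t s) (p q : ι) (hpq : p ≠ q) (i j : ι) (x : ι → ℝ) :
    pd2 (fun x => ψ (x p) (x q)) i j x =
      (if i = p ∧ j = p then dd1 ψ (x p) (x q) else 0) +
      (if i = q ∧ j = q then dd1 ψ' (x q) (x p) else 0) +
      ((if i = p ∧ j = q then ddm ψ (x p) (x q) else 0) +
      (if i = q ∧ j = p then ddm ψ' (x q) (x p) else 0)) := by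
  unfold pd2
  by_cases hjp : j = p
  · subst hjp
    have h : pd (fun x : ι → ℝ => ψ (x j) (x q)) j =
        fun x => deriv (fun s => ψ s (x q)) (x j) := by
      funext x
      simp [pd, Function.update_of_ne (Ne.symm hpq)]
    rw [h]
    by_cases hi : i = j
    · subst hi
      simp [pd, hpq, Function.update_of_ne (Ne.symm hpq), dd1]
    · by_cases hi' : i = q
      · subst hi'
        simp [pd, hpq, Function.update_of_ne hpq, ddm, hs, hi]
      · simp [pd, hi, hi', Function.update_of_ne (Ne.symm hi),
          Function.update_of_ne (Ne.symm hi')]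
  · by_cases hjq : j = q
    · subst hjq
      have h : pd (fun x : ι → ℝ => ψ (x p) (x j)) j =
          fun x => deriv (fun s => ψ (x p) s) (x j) := by
        funext x
        simp [pd, Function.update_of_ne hpq]
      rw [h]
      by_cases hi : i = j
      · subst hi
        simp [pd, hjp, Function.update_of_ne hpq, dd1, hs]
      · by_cases hi' : i = p
        · subst hi'
          simp [pd, hi, hjp, Function.update_of_ne (Ne.symm hi), ddm]
        · simp [pd, hi, hi', Function.update_of_ne (Ne.symm hi),
            Function.update_of_ne (Ne.symm hi')]
    · have h : pd (fun x : ι → ℝ => ψ (x p) (x q)) j = fun x => 0 := by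
        funext x
        simp [pd, Function.update_of_ne (Ne.symm hjp), Function.update_of_ne (Ne.symm hjq)]
      rw [h]
      simp [pd, hjp, hjq]

/-- extension of a walk by one vertex -/
def extTV {V : Type*} {t : ℕ} (a : TVert V t) (v : V) (h : a.1.1 < t) : TVert V t :=
  ⟨⟨a.1.1 + 1, by omega⟩, fun m => if hm : m.1 < a.1.1 then a.2 ⟨m.1, hm⟩ else v⟩

lemma walkAt_par {V : Type*} {t : ℕ} (r : V) (a : TVert V t) (m : ℕ) (hm : m ≤ a.1.1 - 1) :
    walkAt r (parTV a) m = walkAt r a m := by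
  unfold walkAt parTV
  by_cases h : 1 ≤ m
  · have h1 : m ≤ a.1.1 := by omega
    simp [h, h1, hm]
  · simp [h]

lemma sig_par {V : Type*} {t : ℕ} (r : V) (a : TVert V t) :
    sigTV r (parTV a) = walkAt r a (a.1.1 - 1) :=
  walkAt_par r a _ le_rfl

lemma par_ext {V : Type*} {t : ℕ} (a : TVert V t) (v : V) (h : a.1.1 < t) :
    parTV (extTV a v h) = a := by
  obtain ⟨⟨k, hk⟩, a⟩ := a
  simp [parTV, extTV]

lemma sig_ext {V : Type*} {t : ℕ} (r : V) (a : TVert V t) (v : V) (h : a.1.1 < t) :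
    sigTV r (extTV a v h) = v := by
  simp [sigTV, walkAt, extTV]

lemma walkAt_ext {V : Type*} {t : ℕ} (r : V) (a : TVert V t) (v : V) (h : a.1.1 < t) (m : ℕ)
    (hm : m ≤ a.1.1) : walkAt r (extTV a v h) m = walkAt r a m := by
  have := walkAt_par r (extTV a v h) m (by simpa [extTV] using hm)
  rw [← this, par_ext]

lemma ext_par {V : Type*} {t : ℕ} (r : V) (c : TVert V t) (hc : 1 ≤ c.1.1)
    (h : (parTV c).1.1 < t) :
    extTV (parTV c) (sigTV r c) h = c := by
  obtain ⟨⟨k, hk⟩, c⟩ := c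
  obtain ⟨k, rfl⟩ : ∃ k', k = k' + 1 := ⟨k - 1, by simp at hc; omega⟩
  simp only [parTV, extTV, sigTV, walkAt]
  congr 1
  funext m
  by_cases hm : m.1 < k
  · simp [hm]
  · have : m = ⟨k, by simp⟩ := by
      ext
      have := m.2
      simp at this ⊢
      omega
    subst this
    simp

lemma mem_valid {V : Type*} [Fintype V] [DecidableEq V] (G : SimpleGraph V)
    [DecidableRel G.Adj] (r : V) (t : ℕ) (a : TVert V t) :
    a ∈ validSet G r t ↔ (∀ m, m < a.1.1 → G.Adj (walkAt r a m) (walkAt r a (m + 1))) ∧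
    (∀ m, m < a.1.1 - 1 → walkAt r a m ≠ walkAt r a (m + 2)) := by
  simp [validSet]

lemma adj_par {V : Type*} [Fintype V] [DecidableEq V] (G : SimpleGraph V)
    [DecidableRel G.Adj] (r : V) (t : ℕ) (a : TVert V t) (ha : a ∈ validSet G r t)
    (h1 : 1 ≤ a.1.1) : G.Adj (sigTV r (parTV a)) (sigTV r a) := by
  rw [sig_par]
  have := ((mem_valid G r t a).1 ha).1 (a.1.1 - 1) (by omega)
  rwa [Nat.sub_add_cancel h1] at this

lemma sig_par_root {V : Type*} {t : ℕ} (r : V) (a : TVert V t) (h : ¬ 1 ≤ a.1.1) :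
    sigTV r (parTV a) = sigTV r a := by
  rw [sig_par]
  unfold sigTV
  have : a.1.1 = 0 := by omega
  rw [this]

/-- sums over the children of a tree vertex -/
lemma sum_children {V : Type*} [Fintype V] [DecidableEq V] (G : SimpleGraph V)
    [DecidableRel G.Adj] (r : V) (t : ℕ) (a : TVert V t) (ha : a ∈ validSet G r t)
    (φ : TVert V t → ℝ) :
    (∑ c ∈ (validSet G r t).filter (fun a => 1 ≤ a.1.1), if a = parTV c then φ c else 0) =
      if h : a.1.1 < t then
        ∑ v ∈ (G.neighborFinset (sigTV r a)).erase (sigTV r (parTV a)), φ (extTV a v h)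
      else 0 := by
  split_ifs with h
  · rw [← Finset.sum_filter]
    symm
    refine Finset.sum_bij (fun v _ => extTV a v h) ?_ ?_ ?_ ?_
    · intro v hv
      simp only [Finset.mem_erase, SimpleGraph.mem_neighborFinset] at hv
      simp only [Finset.mem_filter, par_ext, and_true]
      have hlen : (extTV a v h).1.1 = a.1.1 + 1 := rfl
      refine ⟨?_, by omega⟩
      rw [mem_valid] at ha ⊢
      have hlast : walkAt r (extTV a v h) (a.1.1 + 1) = v := sig_ext r a v h
      constructor
      · intro m hm
        rw [hlen] at hm
        rw [walkAt_ext r a v h m (by omega)]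
        by_cases hm' : m < a.1.1
        · rw [walkAt_ext r a v h (m + 1) (by omega)]
          exact ha.1 m hm'
        · have : m = a.1.1 := by omega
          rw [this, hlast]
          exact hv.2
      · intro m hm
        rw [hlen] at hm
        rw [walkAt_ext r a v h m (by omega)]
        by_cases hm' : m < a.1.1 - 1
        · rw [walkAt_ext r a v h (m + 2) (by omega)]
          exact ha.2 m hm'
        · have h2 : m + 2 = a.1.1 + 1 := by omega
          have h3 : m = a.1.1 - 1 := by omega
          rw [h2, hlast, h3, ← sig_par]
          exact hv.1.symm
    · intro v hv v' hv' he
      have := congrArg (sigTV r) he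
      simpa [sig_ext] using this
    · intro c hc
      simp only [Finset.mem_filter] at hc
      obtain ⟨⟨hc, h1⟩, rfl⟩ := hc
      refine ⟨sigTV r c, ?_, ext_par r c h1 h⟩
      simp only [Finset.mem_erase, SimpleGraph.mem_neighborFinset]
      refine ⟨?_, adj_par G r t c hc h1⟩
      have hp : (parTV c).1.1 = c.1.1 - 1 := rfl
      by_cases h2 : 1 ≤ (parTV c).1.1
      · have := ((mem_valid G r t c).1 hc).2 (c.1.1 - 2) (by omega)
        rw [sig_par, walkAt_par _ _ _ (by omega), hp]
        have e : c.1.1 - 2 + 2 = c.1.1 := by omega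
        rw [e] at this
        have e' : c.1.1 - 1 - 1 = c.1.1 - 2 := by omega
        rw [e']
        exact this.symm
      · rw [sig_par_root r _ h2]
        exact (adj_par G r t c hc h1).ne'
    · intro v hv
      rfl
  · apply Finset.sum_eq_zero
    intro c hc
    simp only [Finset.mem_filter] at hc
    rw [if_neg]
    rintro rfl
    have hp : (parTV c).1.1 = c.1.1 - 1 := rfl
    have := c.1.2
    omega

lemma par_ne {V : Type*} {t : ℕ} (c : TVert V t) (h : 1 ≤ c.1.1) : parTV c ≠ c := by
  intro he
  have h1 : (parTV c).1.1 = c.1.1 - 1 := rfl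
  rw [he] at h1
  omega

/-- splitting a neighbour sum into the parent and the others -/
lemma sum_neighbors {V : Type*} [Fintype V] [DecidableEq V] (G : SimpleGraph V)
    [DecidableRel G.Adj] (r : V) (t : ℕ) (a : TVert V t) (ha : a ∈ validSet G r t)
    (φ : V → ℝ) :
    ∑ v ∈ G.neighborFinset (sigTV r a), φ v =
      (∑ v ∈ (G.neighborFinset (sigTV r a)).erase (sigTV r (parTV a)), φ v) +
      if 1 ≤ a.1.1 then φ (sigTV r (parTV a)) else 0 := by
  split_ifs with h
  · rw [Finset.sum_erase_add]
    simpa using (adj_par G r t a ha h).symm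
  · rw [sig_par_root r a h, Finset.erase_eq_of_notMem (by simp), add_zero]

end Helpers

/-- **The computation tree inherits scaled diagonal dominance** (Lemma 1 of
Moallemi–Van Roy).  If the objective `F` of a pairwise separable convex program is
`(λ,w)`-scaled diagonally dominant and the initial messages satisfy the initialization
assumption, then the computation-tree objective `F_𝒯` is `(λ, w ∘ σ)`-scaled diagonally
dominant. -/
theorem computationTree_scaled_diagonally_dominant
    {V : Type*} [Fintype V] [DecidableEq V] [Nonempty V]
    (G : SimpleGraph V) [DecidableRel G.Adj]
    -- the factors of the pairwise separable convex program
    (f : V → ℝ → ℝ) (g : V → V → ℝ → ℝ → ℝ)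
    (hf_sconv : ∀ i, StrictConvexOn ℝ Set.univ (f i))
    (hf_coer : ∀ i, Tendsto (f i) (cocompact ℝ) atTop)
    (hf_smooth : ∀ i, ContDiff ℝ 2 (f i))
    (hg_conv : ∀ i j, G.Adj i j → ConvexOn ℝ Set.univ (fun q : ℝ × ℝ => g i j q.1 q.2))
    (hg_smooth : ∀ i j, G.Adj i j → ContDiff ℝ 2 (fun q : ℝ × ℝ => g i j q.1 q.2))
    (hg_symm : ∀ i j, G.Adj i j → ∀ a b : ℝ, g i j a b = g j i b a)
    -- the objective function
    (F : (V → ℝ) → ℝ)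
    (hF : F = fun x => (∑ i, f i (x i)) +
      (1 / 2) * ∑ i, ∑ j ∈ G.neighborFinset i, g i j (x i) (x j))
    -- `M = min_i inf_x ∂²F/∂x_i²(x) > 0`
    (M : ℝ) (hM : 0 < M) (hMle : ∀ (i : V) (x : V → ℝ), M ≤ pd2 F i i x)
    -- scaled diagonal dominance
    (lam : ℝ) (w : V → ℝ) (hlam0 : 0 < lam) (hlam1 : lam < 1) (hw : ∀ i, 0 < w i)
    (hdd : ∀ (i : V) (x : V → ℝ),
      ∑ j ∈ univ.erase i, w j * |pd2 F i j x| ≤ lam * w i * pd2 F i i x)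
    -- the initial messages and the initialization assumption
    (J0 : V → V → ℝ → ℝ)
    (hJ0smooth : ∀ i j, G.Adj i j → ContDiff ℝ 2 (J0 i j))
    (hJ0conv : ∀ i j, G.Adj i j → ∃ z : ℝ, ∀ xj : ℝ,
      deriv (deriv (fun b => g i j z b)) xj ≤ deriv (deriv (J0 i j)) xj)
    -- the root and depth of the computation tree, and its objective function
    (r : V) (t : ℕ)
    (FT : (TVert V t → ℝ) → ℝ)
    (hFT : FT = fun x =>
      (∑ a ∈ validSet G r t, f (sigTV r a) (x a)) +
      (∑ a ∈ (validSet G r t).filter (fun a => 1 ≤ a.1.1),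
        g (sigTV r (parTV a)) (sigTV r a) (x (parTV a)) (x a)) +
      (∑ a ∈ (validSet G r t).filter (fun a => a.1.1 = t),
        ∑ u ∈ (G.neighborFinset (sigTV r a)).erase (sigTV r (parTV a)),
          J0 u (sigTV r a) (x a))) :
    -- conclusion: `F_𝒯` is `(λ, w ∘ σ)`-scaled diagonally dominant
    ∀ a ∈ validSet G r t, ∀ x : TVert V t → ℝ,
      ∑ u ∈ (validSet G r t).erase a, w (sigTV r u) * |pd2 FT a u x| ≤
        lam * w (sigTV r a) * pd2 FT a a x := by
  intro a ha x
  -- smoothness of the pieces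
  have hsm1 : ∀ {ι : Type _} [Fintype ι] (φ : ℝ → ℝ) (p : ι), ContDiff ℝ 2 φ →
      ContDiff ℝ 2 (fun x : ι → ℝ => φ (x p)) := by
    intro ι _ φ p h
    exact h.comp (contDiff_apply ℝ ℝ p)
  have hsm2 : ∀ {ι : Type _} [Fintype ι] (i j : V) (p q : ι), G.Adj i j →
      ContDiff ℝ 2 (fun x : ι → ℝ => g i j (x p) (x q)) := by
    intro ι _ i j p q h
    exact (hg_smooth i j h).comp ((contDiff_apply ℝ ℝ p).prodMk (contDiff_apply ℝ ℝ q))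
  -- second derivatives of `F`
  have hF2 : ∀ (i j : V) (y : V → ℝ), pd2 F i j y =
      (∑ k, if i = k ∧ j = k then deriv (deriv (f k)) (y k) else 0) +
      (1 / 2) * ∑ k, ∑ l ∈ G.neighborFinset k,
        ((if i = k ∧ j = k then dd1 (g k l) (y k) (y l) else 0) +
        (if i = l ∧ j = l then dd1 (g l k) (y l) (y k) else 0) +
        ((if i = k ∧ j = l then ddm (g k l) (y k) (y l) else 0) +
        (if i = l ∧ j = k then ddm (g l k) (y l) (y k) else 0))) := by
    intro i j y
    have hs : ∀ k, ∀ l ∈ G.neighborFinset k,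
        ContDiff ℝ 2 (fun y : V → ℝ => g k l (y k) (y l)) := by
      intro k l hl
      exact hsm2 k l k l (by simpa using hl)
    rw [hF, pd2_add (ContDiff.sum fun k _ => hsm1 (f k) k (hf_smooth k))
      (contDiff_const.mul (ContDiff.sum fun k _ => ContDiff.sum fun l hl => hs k l hl)),
      pd2_const_mul, pd2_sum _ _ (fun k _ => hsm1 (f k) k (hf_smooth k)),
      pd2_sum _ _ (fun k _ => ContDiff.sum fun l hl => hs k l hl)]
    congr 1
    · exact Finset.sum_congr rfl fun k _ => pd2_single (f k) k i j y
    · congr 1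
      refine Finset.sum_congr rfl fun k _ => ?_
      rw [pd2_sum _ _ (hs k)]
      refine Finset.sum_congr rfl fun l hl => ?_
      have hkl : G.Adj k l := by simpa using hl
      exact pd2_edge (g k l) (g l k) (hg_symm k l hkl) k l hkl.ne i j y
  have hswap : ∀ (i : V) (A : V → V → ℝ),
      (∑ k, ∑ l ∈ G.neighborFinset k, if i = l then A l k else 0) =
        ∑ l ∈ G.neighborFinset i, A i l := by
    intro i A
    simp only [Finset.sum_ite_eq, SimpleGraph.mem_neighborFinset]
    rw [← Finset.sum_filter]
    refine Finset.sum_congr ?_ fun _ _ => rfl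
    ext k
    simp [G.adj_comm]
  have hFd : ∀ (i : V) (y : V → ℝ), pd2 F i i y = deriv (deriv (f i)) (y i) +
      ∑ l ∈ G.neighborFinset i, dd1 (g i l) (y i) (y l) := by
    intro i y
    rw [hF2]
    congr 1
    · simp
    · have h1 : ∀ k, ∀ l ∈ G.neighborFinset k,
        ((if i = k ∧ i = k then dd1 (g k l) (y k) (y l) else 0) +
        (if i = l ∧ i = l then dd1 (g l k) (y l) (y k) else 0) +
        ((if i = k ∧ i = l then ddm (g k l) (y k) (y l) else 0) +
        (if i = l ∧ i = k then ddm (g l k) (y l) (y k) else 0))) =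
        (if i = k then dd1 (g k l) (y k) (y l) else 0) +
        (if i = l then dd1 (g l k) (y l) (y k) else 0) := by
        intro k l hl
        have hkl : k ≠ l := G.ne_of_adj (by simpa using hl)
        have h2 : ¬ (i = k ∧ i = l) := fun h => hkl (h.1.symm.trans h.2)
        have h3 : ¬ (i = l ∧ i = k) := fun h => hkl (h.2.symm.trans h.1)
        simp only [h2, h3, if_false, and_self, add_zero]
      rw [Finset.sum_congr rfl fun k _ => Finset.sum_congr rfl (h1 k)]
      simp only [Finset.sum_add_distrib]
      rw [hswap i (fun l k => dd1 (g l k) (y l) (y k))]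
      have h4 : (∑ k, ∑ l ∈ G.neighborFinset k,
          if i = k then dd1 (g k l) (y k) (y l) else 0) =
          ∑ l ∈ G.neighborFinset i, dd1 (g i l) (y i) (y l) := by
        rw [Finset.sum_eq_single i]
        · simp
        · intro k _ hk
          simp [Ne.symm hk]
        · simp
      rw [h4]
      ring
  have hFo : ∀ (i j : V) (y : V → ℝ), G.Adj i j → pd2 F i j y = ddm (g i j) (y i) (y j) := by
    intro i j y hij
    have hne := hij.ne
    rw [hF2]
    have h0 : ∀ k, ¬ (i = k ∧ j = k) := fun k h => hne (h.1.trans h.2.symm)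
    simp only [h0, if_false, Finset.sum_const_zero, zero_add, Finset.sum_add_distrib]
    have h4 : (∑ k, ∑ l ∈ G.neighborFinset k,
          if i = k ∧ j = l then ddm (g k l) (y k) (y l) else 0) = ddm (g i j) (y i) (y j) := by
      rw [Finset.sum_eq_single i]
      · simp [hij]
      · intro k _ hk
        simp [Ne.symm hk]
      · simp
    have h5 : (∑ k, ∑ l ∈ G.neighborFinset k,
          if i = l ∧ j = k then ddm (g l k) (y l) (y k) else 0) =
          ddm (g i j) (y i) (y j) := by
      rw [Finset.sum_eq_single j]
      · simp [hij.symm]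
      · intro k _ hk
        simp [Ne.symm hk]
      · simp
    rw [h4, h5]
    ring
  -- second derivatives of `FT`
  set E := (validSet G r t).filter (fun a => 1 ≤ a.1.1) with hE
  have hEadj : ∀ c ∈ E, G.Adj (sigTV r (parTV c)) (sigTV r c) := by
    intro c hc
    rw [hE, Finset.mem_filter] at hc
    exact adj_par G r t c hc.1 hc.2
  have hEne : ∀ c ∈ E, parTV c ≠ c := by
    intro c hc
    rw [hE, Finset.mem_filter] at hc
    exact par_ne c hc.2
  have hT2 : ∀ u : TVert V t, pd2 FT a u x =
      (∑ c ∈ validSet G r t,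
        if a = c ∧ u = c then deriv (deriv (f (sigTV r c))) (x c) else 0) +
      (∑ c ∈ E,
        ((if a = parTV c ∧ u = parTV c then
            dd1 (g (sigTV r (parTV c)) (sigTV r c)) (x (parTV c)) (x c) else 0) +
        (if a = c ∧ u = c then
            dd1 (g (sigTV r c) (sigTV r (parTV c))) (x c) (x (parTV c)) else 0) +
        ((if a = parTV c ∧ u = c then
            ddm (g (sigTV r (parTV c)) (sigTV r c)) (x (parTV c)) (x c) else 0) +
        (if a = c ∧ u = parTV c then
            ddm (g (sigTV r c) (sigTV r (parTV c))) (x c) (x (parTV c)) else 0)))) +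
      (∑ c ∈ (validSet G r t).filter (fun a => a.1.1 = t),
        ∑ v ∈ (G.neighborFinset (sigTV r c)).erase (sigTV r (parTV c)),
          if a = c ∧ u = c then deriv (deriv (J0 v (sigTV r c))) (x c) else 0) := by
    intro u
    have hs2 : ∀ c ∈ E, ContDiff ℝ 2 (fun x : TVert V t → ℝ =>
        g (sigTV r (parTV c)) (sigTV r c) (x (parTV c)) (x c)) := by
      intro c hc
      exact hsm2 _ _ _ _ (hEadj c hc)
    have hs3 : ∀ c : TVert V t, ∀ v ∈ (G.neighborFinset (sigTV r c)).erase (sigTV r (parTV c)),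
        ContDiff ℝ 2 (fun x : TVert V t → ℝ => J0 v (sigTV r c) (x c)) := by
      intro c v hv
      refine hsm1 _ _ (hJ0smooth _ _ ?_)
      simp only [Finset.mem_erase, SimpleGraph.mem_neighborFinset] at hv
      exact hv.2.symm
    have hs1 : ∀ c ∈ validSet G r t,
        ContDiff ℝ 2 (fun x : TVert V t → ℝ => f (sigTV r c) (x c)) :=
      fun c _ => hsm1 _ _ (hf_smooth _)
    rw [hFT, pd2_add ((ContDiff.sum hs1).add (ContDiff.sum hs2))
      (ContDiff.sum fun c _ => ContDiff.sum (hs3 c)),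
      pd2_add (ContDiff.sum hs1) (ContDiff.sum hs2), pd2_sum _ _ hs1, pd2_sum _ _ hs2,
      pd2_sum _ _ (fun c _ => ContDiff.sum (hs3 c))]
    congr 1
    · congr 1
      · exact Finset.sum_congr rfl fun c _ => pd2_single (f (sigTV r c)) c a u x
      · refine Finset.sum_congr rfl fun c hc => ?_
        exact pd2_edge _ (g (sigTV r c) (sigTV r (parTV c)))
          (hg_symm _ _ (hEadj c hc)) (parTV c) c (hEne c hc) a u x
    · refine Finset.sum_congr rfl fun c _ => ?_
      rw [pd2_sum _ _ (hs3 c)]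
      exact Finset.sum_congr rfl fun v _ => pd2_single (J0 v (sigTV r c)) c a u x
  have haE : a ∈ E ↔ 1 ≤ a.1.1 := by
    rw [hE, Finset.mem_filter]
    exact and_iff_right ha
  set C := (G.neighborFinset (sigTV r a)).erase (sigTV r (parTV a)) with hC
  have hCadj : ∀ v ∈ C, G.Adj (sigTV r a) v ∧ v ≠ sigTV r (parTV a) := by
    intro v hv
    rw [hC, Finset.mem_erase, SimpleGraph.mem_neighborFinset] at hv
    exact ⟨hv.2, hv.1⟩
  have hTd : pd2 FT a a x = deriv (deriv (f (sigTV r a))) (x a) +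
      ((if h : a.1.1 < t then ∑ v ∈ C, dd1 (g (sigTV r a) v) (x a) (x (extTV a v h)) else 0) +
        (if 1 ≤ a.1.1 then
          dd1 (g (sigTV r a) (sigTV r (parTV a))) (x a) (x (parTV a)) else 0)) +
      (if a.1.1 = t then ∑ v ∈ C, deriv (deriv (J0 v (sigTV r a))) (x a) else 0) := by
    rw [hT2]
    congr 1
    · congr 1
      · simp [ha]
      · have h1 : ∀ c ∈ E,
          ((if a = parTV c ∧ a = parTV c then
              dd1 (g (sigTV r (parTV c)) (sigTV r c)) (x (parTV c)) (x c) else 0) +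
          (if a = c ∧ a = c then
              dd1 (g (sigTV r c) (sigTV r (parTV c))) (x c) (x (parTV c)) else 0) +
          ((if a = parTV c ∧ a = c then
              ddm (g (sigTV r (parTV c)) (sigTV r c)) (x (parTV c)) (x c) else 0) +
          (if a = c ∧ a = parTV c then
              ddm (g (sigTV r c) (sigTV r (parTV c))) (x c) (x (parTV c)) else 0))) =
          (if a = parTV c then
              dd1 (g (sigTV r (parTV c)) (sigTV r c)) (x (parTV c)) (x c) else 0) +
          (if a = c then
              dd1 (g (sigTV r c) (sigTV r (parTV c))) (x c) (x (parTV c)) else 0) := by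
          intro c hc
          have h2 : ¬ (a = parTV c ∧ a = c) := fun h => hEne c hc (h.1.symm.trans h.2)
          have h3 : ¬ (a = c ∧ a = parTV c) := fun h => hEne c hc (h.2.symm.trans h.1)
          simp only [h2, h3, if_false, and_self, add_zero]
        rw [Finset.sum_congr rfl h1, Finset.sum_add_distrib, Finset.sum_ite_eq]
        simp only [haE]
        rw [hE, sum_children G r t a ha
          (fun c => dd1 (g (sigTV r (parTV c)) (sigTV r c)) (x (parTV c)) (x c))]
        simp only [par_ext, sig_ext, hC]
    · split_ifs with ht
      · rw [Finset.sum_eq_single a]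
        · simp [hC]
        · intro c _ hc
          simp [Ne.symm hc]
        · intro h
          exact absurd (Finset.mem_filter.2 ⟨ha, ht⟩) h
      · apply Finset.sum_eq_zero
        intro c hc
        have hca : a ≠ c := by
          rintro rfl
          exact ht (Finset.mem_filter.1 hc).2
        simp [hca]
  have hTo : ∑ u ∈ (validSet G r t).erase a, w (sigTV r u) * |pd2 FT a u x| ≤
      (if h : a.1.1 < t then
        ∑ v ∈ C, w v * |ddm (g (sigTV r a) v) (x a) (x (extTV a v h))| else 0) +
      (if 1 ≤ a.1.1 then w (sigTV r (parTV a)) *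
          |ddm (g (sigTV r a) (sigTV r (parTV a))) (x a) (x (parTV a))| else 0) := by
    have h1 : ∀ u ∈ (validSet G r t).erase a, w (sigTV r u) * |pd2 FT a u x| ≤
        ∑ c ∈ E, ((if u = c then if a = parTV c then w (sigTV r c) *
            |ddm (g (sigTV r (parTV c)) (sigTV r c)) (x (parTV c)) (x c)| else 0 else 0) +
          (if u = parTV c then if a = c then w (sigTV r (parTV c)) *
            |ddm (g (sigTV r c) (sigTV r (parTV c))) (x c) (x (parTV c))| else 0 else 0)) := by
      intro u hu
      have hua : u ≠ a := (Finset.mem_erase.1 hu).1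
      have h0 : ∀ c, ¬ (a = c ∧ u = c) := fun c h => hua (h.2.trans h.1.symm)
      rw [hT2]
      simp only [h0, if_false, Finset.sum_const_zero, zero_add, add_zero]
      refine (mul_le_mul_of_nonneg_left (Finset.abs_sum_le_sum_abs _ _) (hw _).le).trans ?_
      rw [Finset.mul_sum]
      refine Finset.sum_le_sum fun c _ => ?_
      refine (mul_le_mul_of_nonneg_left (abs_add_le _ _) (hw _).le).trans ?_
      rw [mul_add]
      refine add_le_add (le_of_eq ?_) (le_of_eq ?_)
      · by_cases h2 : u = c
        · by_cases h3 : a = parTV c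
          · simp only [h2, h3, and_self, if_true]
          · simp [h3]
        · simp [h2]
      · by_cases h2 : u = parTV c
        · by_cases h3 : a = c
          · simp only [h2, h3, and_self, if_true]
          · simp [h3]
        · simp [h2]
    refine (Finset.sum_le_sum h1).trans ?_
    rw [Finset.sum_comm]
    have h2 : ∀ c ∈ E, (∑ u ∈ (validSet G r t).erase a,
        ((if u = c then if a = parTV c then w (sigTV r c) *
            |ddm (g (sigTV r (parTV c)) (sigTV r c)) (x (parTV c)) (x c)| else 0 else 0) +
          (if u = parTV c then if a = c then w (sigTV r (parTV c)) *
            |ddm (g (sigTV r c) (sigTV r (parTV c))) (x c) (x (parTV c))| else 0 else 0))) ≤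
        (if a = parTV c then w (sigTV r c) *
            |ddm (g (sigTV r (parTV c)) (sigTV r c)) (x (parTV c)) (x c)| else 0) +
        (if a = c then w (sigTV r (parTV c)) *
            |ddm (g (sigTV r c) (sigTV r (parTV c))) (x c) (x (parTV c))| else 0) := by
      intro c _
      rw [Finset.sum_add_distrib, Finset.sum_ite_eq', Finset.sum_ite_eq']
      have hA : 0 ≤ (if a = parTV c then w (sigTV r c) *
            |ddm (g (sigTV r (parTV c)) (sigTV r c)) (x (parTV c)) (x c)| else 0) := by
        split_ifs
        · exact mul_nonneg (hw _).le (abs_nonneg _)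
        · exact le_rfl
      have hB : 0 ≤ (if a = c then w (sigTV r (parTV c)) *
            |ddm (g (sigTV r c) (sigTV r (parTV c))) (x c) (x (parTV c))| else 0) := by
        split_ifs
        · exact mul_nonneg (hw _).le (abs_nonneg _)
        · exact le_rfl
      refine add_le_add ?_ ?_
      · refine (ite_le_sup _ _ _).trans ?_
        exact sup_le le_rfl hA
      · refine (ite_le_sup _ _ _).trans ?_
        exact sup_le le_rfl hB
    refine (Finset.sum_le_sum h2).trans (le_of_eq ?_)
    rw [Finset.sum_add_distrib, Finset.sum_ite_eq]
    simp only [haE]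
    rw [hE, sum_children G r t a ha (fun c => w (sigTV r c) *
      |ddm (g (sigTV r (parTV c)) (sigTV r c)) (x (parTV c)) (x c)|)]
    simp only [par_ext, sig_ext, hC]
  -- the comparison point
  have hz : ∀ v : V, ∃ z : ℝ, v ∈ C →
      dd1 (g (sigTV r a) v) (x a) z ≤ deriv (deriv (J0 v (sigTV r a))) (x a) := by
    intro v
    by_cases hv : v ∈ C
    · have hadj := (hCadj v hv).1.symm
      obtain ⟨z, hz⟩ := hJ0conv v (sigTV r a) hadj
      refine ⟨z, fun _ => ?_⟩
      have := hz (x a)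
      have he : (fun b => g v (sigTV r a) z b) = fun b => g (sigTV r a) v b z := by
        funext b
        exact hg_symm _ _ hadj z b
      rw [he] at this
      exact this
    · exact ⟨0, fun h => absurd h hv⟩
  choose z hz using hz
  obtain ⟨y, hya, hyp, hyc, hyz⟩ : ∃ y : V → ℝ, y (sigTV r a) = x a ∧
      (1 ≤ a.1.1 → y (sigTV r (parTV a)) = x (parTV a)) ∧
      (∀ h : a.1.1 < t, ∀ v ∈ C, y v = x (extTV a v h)) ∧
      (¬ a.1.1 < t → ∀ v ∈ C, y v = z v) := by
    refine ⟨fun j => if j = sigTV r a then x a else if j = sigTV r (parTV a) then x (parTV a)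
      else if h : a.1.1 < t then x (extTV a j h) else z j, ?_, ?_, ?_, ?_⟩
    · simp
    · intro h
      simp [(adj_par G r t a ha h).ne]
    · intro h v hv
      simp [(hCadj v hv).1.ne', (hCadj v hv).2, h]
    · intro h v hv
      simp [(hCadj v hv).1.ne', (hCadj v hv).2, h]
  have hd := hdd (sigTV r a) y
  have hL : ∑ u ∈ (validSet G r t).erase a, w (sigTV r u) * |pd2 FT a u x| ≤
      ∑ j ∈ univ.erase (sigTV r a), w j * |pd2 F (sigTV r a) j y| := by
    have h1 : ∑ v ∈ G.neighborFinset (sigTV r a), w v * |pd2 F (sigTV r a) v y| ≤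
        ∑ j ∈ univ.erase (sigTV r a), w j * |pd2 F (sigTV r a) j y| := by
      refine Finset.sum_le_sum_of_subset_of_nonneg ?_ ?_
      · intro v hv
        rw [SimpleGraph.mem_neighborFinset] at hv
        simp [hv.ne']
      · intro v _ _
        exact mul_nonneg (hw _).le (abs_nonneg _)
    refine hTo.trans (le_trans ?_ h1)
    rw [sum_neighbors G r t a ha, ← hC]
    refine add_le_add ?_ ?_
    · split_ifs with h
      · refine Finset.sum_le_sum fun v hv => le_of_eq ?_
        rw [hFo _ _ _ (hCadj v hv).1, hya, hyc h v hv]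
      · exact Finset.sum_nonneg fun v _ => mul_nonneg (hw _).le (abs_nonneg _)
    · split_ifs with h
      · rw [hFo _ _ _ (adj_par G r t a ha h).symm, hya, hyp h]
      · exact le_rfl
  have hR : pd2 F (sigTV r a) (sigTV r a) y ≤ pd2 FT a a x := by
    rw [hFd, hTd, sum_neighbors G r t a ha, ← hC, hya]
    have hP : (if 1 ≤ a.1.1 then
          dd1 (g (sigTV r a) (sigTV r (parTV a))) (x a) (y (sigTV r (parTV a))) else 0) =
        (if 1 ≤ a.1.1 then
          dd1 (g (sigTV r a) (sigTV r (parTV a))) (x a) (x (parTV a)) else 0) := by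
      split_ifs with h
      · rw [hyp h]
      · rfl
    rw [hP]
    by_cases h : a.1.1 < t
    · have hs : ∑ v ∈ C, dd1 (g (sigTV r a) v) (x a) (y v) =
          ∑ v ∈ C, dd1 (g (sigTV r a) v) (x a) (x (extTV a v h)) :=
        Finset.sum_congr rfl fun v hv => by rw [hyc h v hv]
      rw [dif_pos h, if_neg h.ne, hs, add_zero]
    · have h' : a.1.1 = t := by
        have := a.1.2
        omega
      have hs : ∑ v ∈ C, dd1 (g (sigTV r a) v) (x a) (y v) ≤
          ∑ v ∈ C, deriv (deriv (J0 v (sigTV r a))) (x a) :=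
        Finset.sum_le_sum fun v hv => by
          rw [hyz h v hv]
          exact hz v hv
      rw [dif_neg h, if_pos h']
      linarith
  exact hL.trans (hd.trans (mul_le_mul_of_nonneg_left hR (mul_pos hlam0 (hw _)).le))
end

section
/- Consider a pairwise separable convex program with the perturbed min-sum algorithm, with initial messages satisfying the initialization assumption. Define p* ∈ ℝ^{E⃗} by p*_{i→j} = ∂f_{ij}/∂x_j(x*_i, x*_j) − (J^{(0)}_{i→j})'(x*_j). Then for every t ≥ 0 and every (i,j) ∈ E⃗, the message J^{(t)}_{i→j}(·, p*) is differentiable at x*_j with (d/dx_j) J^{(t)}_{i→j}(x*_j, p*) = ∂f_{ij}/∂x_j(x*_i, x*_j), and x^{(t)}_j(p*) = x*_j for every j ∈ V. -/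
open Filter Finset

/-- The directed edges `E⃗` of a simple graph. -/
abbrev EdgeDir {V : Type*} (G : SimpleGraph V) : Type _ := {e : V × V // G.Adj e.1 e.2}

theorem aux_squeeze (φ ψ : ℝ → ℝ) (a d : ℝ) (hφ : ConvexOn ℝ Set.univ φ)
    (hle : ∀ x, φ x ≤ ψ x) (heq : φ a = ψ a) (hψ : HasDerivAt ψ d a) : HasDerivAt φ d a := by
  rw [hasDerivAt_iff_isLittleO, Asymptotics.isLittleO_iff] at *
  intro c hc
  have h1 := hψ hc
  have hr : Tendsto (fun x : ℝ => 2 * a - x) (nhds a) (nhds a) := by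
    have : Tendsto (fun x : ℝ => 2 * a - x) (nhds a) (nhds (2 * a - a)) :=
      (continuous_const.sub continuous_id).tendsto a
    simpa [two_mul] using this
  have h2 := hr.eventually h1
  filter_upwards [h1, h2] with x hx1 hx2
  have hm : 2 * φ a ≤ φ x + φ (2 * a - x) := by
    have := hφ.2 (Set.mem_univ x) (Set.mem_univ (2 * a - x))
      (by norm_num : (0 : ℝ) ≤ 1 / 2) (by norm_num : (0 : ℝ) ≤ 1 / 2) (by norm_num)
    simp only [smul_eq_mul] at this
    have e : 1 / 2 * x + 1 / 2 * (2 * a - x) = a := by ring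
    rw [e] at this
    linarith
  have e2 : 2 * a - x - a = -(x - a) := by ring
  rw [e2, norm_neg] at hx2
  simp only [Real.norm_eq_abs, smul_eq_mul] at *
  have l1 := hle x
  have l2 := hle (2 * a - x)
  have b1 := abs_le.1 hx1
  have b2 := abs_le.1 hx2
  rw [abs_le]
  constructor
  · nlinarith [b2.2]
  · nlinarith [b1.2]

theorem aux_min (φ : ℝ → ℝ) (a : ℝ) (hφ : ConvexOn ℝ Set.univ φ)
    (hd : HasDerivAt φ 0 a) (x : ℝ) : φ a ≤ φ x := by
  rcases lt_trichotomy x a with h | h | h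
  · have := hφ.slope_le_of_hasDerivAt (Set.mem_univ x) (Set.mem_univ a) h hd
    rw [slope_def_field, div_le_iff₀ (by linarith)] at this
    linarith
  · rw [h]
  · have := hφ.le_slope_of_hasDerivAt (Set.mem_univ a) (Set.mem_univ x) h hd
    rw [slope_def_field, le_div_iff₀ (by linarith)] at this
    linarith

theorem aux_sum_convex {ι : Type*} (s : Finset ι) (φ : ι → ℝ → ℝ)
    (h : ∀ i ∈ s, ConvexOn ℝ Set.univ (φ i)) :
    ConvexOn ℝ Set.univ (fun y => ∑ i ∈ s, φ i y) := by
  classical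
  induction s using Finset.induction_on with
  | empty => simpa using convexOn_const (0 : ℝ) (convex_univ (𝕜 := ℝ) (E := ℝ))
  | insert a s ha ih =>
    simp only [Finset.sum_insert ha]
    exact (h a (by simp)).add (ih fun i hi => h i (by simp [hi]))

theorem aux_partial_min (a : ℝ → ℝ) (g : ℝ → ℝ → ℝ) (φ : ℝ → ℝ)
    (ha : ConvexOn ℝ Set.univ a)
    (hg : ConvexOn ℝ Set.univ (fun q : ℝ × ℝ => g q.1 q.2))
    (hφ : ∀ x, IsLeast (Set.range fun y => a y + g y x) (φ x)) :
    ConvexOn ℝ Set.univ φ := by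
  refine ⟨convex_univ, ?_⟩
  intro x _ x' _ s t hs ht hst
  obtain ⟨y, hy⟩ := (hφ x).1
  obtain ⟨y', hy'⟩ := (hφ x').1
  have h1 := (hφ (s • x + t • x')).2 ⟨s • y + t • y', rfl⟩
  have h2 := ha.2 (Set.mem_univ y) (Set.mem_univ y') hs ht hst
  have h3 := hg.2 (Set.mem_univ (y, x)) (Set.mem_univ (y', x')) hs ht hst
  simp only [smul_eq_mul, Prod.smul_mk, Prod.mk_add_mk] at *
  rw [← hy, ← hy']
  nlinarith

theorem aux_pair_sum {V : Type*} [Fintype V] [DecidableEq V]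
    (G : SimpleGraph V) [DecidableRel G.Adj] (D : V → V → ℝ) (i : V)
    (hs : ∀ k j, G.Adj k j → D k j = D j k)
    (h0 : ∀ k j, k ≠ i → j ≠ i → D k j = 0) :
    ∑ k, ∑ j ∈ G.neighborFinset k, D k j = 2 * ∑ j ∈ G.neighborFinset i, D i j := by
  rw [← Finset.add_sum_erase _ _ (Finset.mem_univ i), two_mul]
  congr 1
  have h1 : ∀ k ∈ Finset.univ.erase i, ∑ j ∈ G.neighborFinset k, D k j
      = if G.Adj i k then D i k else 0 := by
    intro k hk
    have hki : k ≠ i := (Finset.mem_erase.1 hk).1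
    split_ifs with hadj
    · rw [hs i k hadj]
      refine Finset.sum_eq_single i (fun j _ hj => h0 k j hki hj) ?_
      intro hn
      exact absurd ((G.mem_neighborFinset k i).2 hadj.symm) hn
    · refine Finset.sum_eq_zero fun j hj => h0 k j hki ?_
      rintro rfl
      exact hadj ((G.mem_neighborFinset k j).1 hj).symm
  rw [Finset.sum_congr rfl h1, ← Finset.sum_filter]
  refine Finset.sum_congr ?_ fun _ _ => rfl
  ext k
  simp only [Finset.mem_filter, Finset.mem_erase, Finset.mem_univ, and_true,
    SimpleGraph.mem_neighborFinset]
  exact ⟨fun h => h.2, fun h => ⟨h.ne', h⟩⟩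

/-- **The perturbation `p*` makes min-sum exact** (Lemma 2 of Moallemi–Van Roy).
With `p*_{i→j} = ∂f_{ij}/∂x_j(x*_i, x*_j) - (J⁰_{i→j})'(x*_j)`, the perturbed messages
satisfy `(d/dx_j) J⁽ᵗ⁾_{i→j}(x*_j, p*) = ∂f_{ij}/∂x_j(x*_i, x*_j)` for all `t`, and the
perturbed estimates satisfy `x⁽ᵗ⁾_j(p*) = x*_j` for all `t` and `j`. -/
theorem minSum_perturbed_pstar_exact
    {V : Type*} [Fintype V] [DecidableEq V] [Nonempty V]
    (G : SimpleGraph V) [DecidableRel G.Adj]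
    -- the factors of the pairwise separable convex program
    (f : V → ℝ → ℝ) (g : V → V → ℝ → ℝ → ℝ)
    (hf_sconv : ∀ i, StrictConvexOn ℝ Set.univ (f i))
    (hf_coer : ∀ i, Tendsto (f i) (cocompact ℝ) atTop)
    (hf_smooth : ∀ i, ContDiff ℝ 2 (f i))
    (hg_conv : ∀ i j, G.Adj i j → ConvexOn ℝ Set.univ (fun q : ℝ × ℝ => g i j q.1 q.2))
    (hg_smooth : ∀ i j, G.Adj i j → ContDiff ℝ 2 (fun q : ℝ × ℝ => g i j q.1 q.2))
    (hg_symm : ∀ i j, G.Adj i j → ∀ a b : ℝ, g i j a b = g j i b a)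
    -- the objective function
    (F : (V → ℝ) → ℝ)
    (hF : F = fun x => (∑ i, f i (x i)) +
      (1 / 2) * ∑ i, ∑ j ∈ G.neighborFinset i, g i j (x i) (x j))
    -- `M = min_i inf_x ∂²F/∂x_i²(x) > 0`
    (M : ℝ) (hM : 0 < M) (hMle : ∀ (i : V) (x : V → ℝ), M ≤ pd2 F i i x)
    -- the unique optimal solution
    (xstar : V → ℝ) (hxstar : ∀ y, y ≠ xstar → F xstar < F y)
    -- the initial messages and the initialization assumption
    (J0 : V → V → ℝ → ℝ)
    (hJ0smooth : ∀ i j, G.Adj i j → ContDiff ℝ 2 (J0 i j))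
    (hJ0conv : ∀ i j, G.Adj i j → ∃ z : ℝ, ∀ xj : ℝ,
      deriv (deriv (fun b => g i j z b)) xj ≤ deriv (deriv (J0 i j)) xj)
    -- the perturbed min-sum messages and their update rule (minima are attained)
    (JP : ℕ → V → V → (EdgeDir G → ℝ) → ℝ → ℝ)
    (hJP0 : ∀ (i j : V) (h : G.Adj i j) (p : EdgeDir G → ℝ) (xj : ℝ),
      JP 0 i j p xj = J0 i j xj + p ⟨(i, j), h⟩ * xj)
    (hJPrec : ∀ (t : ℕ) (i j : V), G.Adj i j → ∀ (p : EdgeDir G → ℝ) (xj : ℝ),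
      IsLeast (Set.range fun y : ℝ =>
          f i y + g i j y xj + ∑ u ∈ (G.neighborFinset i).erase j, JP t u i p y)
        (JP (t + 1) i j p xj))
    -- the perturbed estimates: unique minimizers of the local objectives `b⁽ᵗ⁾_i(·, p)`
    (xEstP : ℕ → V → (EdgeDir G → ℝ) → ℝ)
    (hxEstP : ∀ (t : ℕ) (i : V) (p : EdgeDir G → ℝ) (y : ℝ), y ≠ xEstP t i p →
      f i (xEstP t i p) + ∑ u ∈ G.neighborFinset i, JP t u i p (xEstP t i p) <
        f i y + ∑ u ∈ G.neighborFinset i, JP t u i p y)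
    -- the perturbation `p*`
    (pstar : EdgeDir G → ℝ)
    (hpstar : ∀ (i j : V) (h : G.Adj i j),
      pstar ⟨(i, j), h⟩ =
        deriv (fun b => g i j (xstar i) b) (xstar j) - deriv (J0 i j) (xstar j)) :
    (∀ (t : ℕ) (i j : V), G.Adj i j →
      HasDerivAt (fun xj => JP t i j pstar xj)
        (deriv (fun b => g i j (xstar i) b) (xstar j)) (xstar j)) ∧
    ∀ (t : ℕ) (j : V), xEstP t j pstar = xstar j := by
  -- differentiability of the partial functions
  have hd2 : ∀ i j, G.Adj i j → ∀ a : ℝ, ContDiff ℝ 2 (fun b => g i j a b) := fun i j h a =>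
    (hg_smooth i j h).comp (contDiff_const.prodMk contDiff_id)
  have hd1 : ∀ i j, G.Adj i j → ∀ b : ℝ, ContDiff ℝ 2 (fun a => g i j a b) := fun i j h b =>
    (hg_smooth i j h).comp (contDiff_id.prodMk contDiff_const)
  have hD2 : ∀ i j, G.Adj i j → ∀ a b : ℝ,
      HasDerivAt (fun b => g i j a b) (deriv (fun b => g i j a b) b) b := fun i j h a b =>
    (((hd2 i j h a).differentiable (by norm_num)) b).hasDerivAt
  have hsw : ∀ i j, G.Adj i j → ∀ b : ℝ, (fun a => g i j a b) = fun a => g j i b a :=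
    fun i j h b => funext fun a => hg_symm i j h a b
  have hD1 : ∀ i j, G.Adj i j → ∀ a b : ℝ,
      HasDerivAt (fun a => g i j a b) (deriv (fun a => g j i b a) a) a := fun i j h a b => by
    rw [hsw i j h b]; exact hD2 j i h.symm b a
  have hDf : ∀ i a, HasDerivAt (f i) (deriv (f i) a) a := fun i a =>
    (((hf_smooth i).differentiable (by norm_num)) a).hasDerivAt
  -- stationarity of xstar
  have hstat : ∀ i, deriv (f i) (xstar i) + ∑ u ∈ G.neighborFinset i,
      deriv (fun b => g u i (xstar u) b) (xstar i) = 0 := by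
    intro i
    have hder : HasDerivAt (fun y => f i y + ∑ u ∈ G.neighborFinset i, g i u y (xstar u))
        (deriv (f i) (xstar i) + ∑ u ∈ G.neighborFinset i,
          deriv (fun b => g u i (xstar u) b) (xstar i)) (xstar i) := by
      refine (hDf i _).add (HasDerivAt.fun_sum fun u hu => ?_)
      exact hD1 i u ((G.mem_neighborFinset i u).1 hu) _ _
    refine IsLocalMin.hasDerivAt_eq_zero (Filter.Eventually.of_forall fun y => ?_) hder
    set x' := Function.update xstar i y with hx'
    have hle : F xstar ≤ F x' := by
      by_cases h : x' = xstar
      · rw [h]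
      · exact (hxstar x' h).le
    have hself : x' i = y := by simp [hx']
    have hne : ∀ k, k ≠ i → x' k = xstar k := fun k hk => by simp [hx', hk]
    have hp := aux_pair_sum G (fun k j => g k j (x' k) (x' j) - g k j (xstar k) (xstar j)) i
      (fun k j h => by
        show g k j (x' k) (x' j) - _ = g j k (x' j) (x' k) - _
        rw [hg_symm k j h, hg_symm k j h])
      (fun k j hk hj => by
        show g k j (x' k) (x' j) - _ = 0
        rw [hne k hk, hne j hj, sub_self])
    have hq : ∑ k, (f k (x' k) - f k (xstar k)) = f i y - f i (xstar i) := by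
      rw [Finset.sum_eq_single i, hself]
      · intro k _ hk
        rw [hne k hk, sub_self]
      · simp
    have hr : ∑ j ∈ G.neighborFinset i, (g i j (x' i) (x' j) - g i j (xstar i) (xstar j))
        = ∑ j ∈ G.neighborFinset i, g i j y (xstar j)
          - ∑ j ∈ G.neighborFinset i, g i j (xstar i) (xstar j) := by
      rw [← Finset.sum_sub_distrib]
      refine Finset.sum_congr rfl fun j hj => ?_
      rw [hself, hne j ((G.mem_neighborFinset i j).1 hj).ne']
    rw [hr] at hp
    simp only [Finset.sum_sub_distrib] at hp hq
    rw [hF] at hle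
    simp only at hle ⊢
    linarith
  -- convexity in the second variable
  have hg2conv : ∀ i j, G.Adj i j → ∀ a : ℝ, ConvexOn ℝ Set.univ (fun b => g i j a b) := by
    intro i j h a
    refine ⟨convex_univ, fun x _ y _ s t hs ht hst => ?_⟩
    have := (hg_conv i j h).2 (Set.mem_univ (a, x)) (Set.mem_univ (a, y)) hs ht hst
    simp only [smul_eq_mul, Prod.smul_mk, Prod.mk_add_mk] at this ⊢
    rwa [← add_mul, hst, one_mul] at this
  have hg1conv : ∀ i j, G.Adj i j → ∀ b : ℝ, ConvexOn ℝ Set.univ (fun a => g i j a b) :=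
    fun i j h b => by rw [hsw i j h b]; exact hg2conv j i h.symm b
  -- main induction
  have main : ∀ t i j, G.Adj i j → ConvexOn ℝ Set.univ (JP t i j pstar) ∧
      HasDerivAt (JP t i j pstar)
        (deriv (fun b => g i j (xstar i) b) (xstar j)) (xstar j) := by
    intro t
    induction t with
    | zero =>
      intro i j h
      have e : JP 0 i j pstar = fun xj => J0 i j xj + pstar ⟨(i, j), h⟩ * xj :=
        funext fun xj => hJP0 i j h pstar xj
      have hdJ : Differentiable ℝ (J0 i j) := (hJ0smooth i j h).differentiable (by norm_num)
      have hdJ' : Differentiable ℝ (deriv (J0 i j)) := by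
        have : ContDiff ℝ (1 + 1) (J0 i j) := by
          have := hJ0smooth i j h
          norm_num
          exact this
        exact ((contDiff_succ_iff_deriv.1 this).2.2).differentiable (by norm_num)
      rw [e]
      constructor
      · have hc : ConvexOn ℝ Set.univ (J0 i j) := by
          refine convexOn_univ_of_deriv2_nonneg hdJ hdJ' fun x => ?_
          obtain ⟨z, hz⟩ := hJ0conv i j h
          refine le_trans ?_ (hz x)
          have hdg : Differentiable ℝ (fun b => g i j z b) :=
            (hd2 i j h z).differentiable (by norm_num)
          have hmono : Monotone (deriv (fun b => g i j z b)) := by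
            have := (hg2conv i j h z).monotoneOn_deriv (fun x _ => hdg x)
            exact monotoneOn_univ.1 this
          exact hmono.deriv_nonneg
        refine hc.add ⟨convex_univ, fun x _ y _ s t _ _ _ => le_of_eq ?_⟩
        simp only [smul_eq_mul]
        ring
      · have := (hdJ (xstar j)).hasDerivAt.add
          ((hasDerivAt_id (xstar j)).const_mul (pstar ⟨(i, j), h⟩))
        rw [hpstar i j h] at this ⊢
        refine HasDerivAt.congr_deriv this ?_
        ring
    | succ t ih =>
      intro i j h
      have hac : ConvexOn ℝ Set.univ
          (fun y => f i y + ∑ u ∈ (G.neighborFinset i).erase j, JP t u i pstar y) :=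
        (hf_sconv i).convexOn.add (aux_sum_convex _ _ fun u hu =>
          (ih u i ((G.mem_neighborFinset i u).1 (Finset.mem_of_mem_erase hu)).symm).1)
      have hL : ∀ x, IsLeast (Set.range fun y =>
          (f i y + ∑ u ∈ (G.neighborFinset i).erase j, JP t u i pstar y) + g i j y x)
          (JP (t + 1) i j pstar x) := by
        intro x
        have := hJPrec t i j h pstar x
        simpa only [add_right_comm] using this
      have hc := aux_partial_min _ _ _ hac (hg_conv i j h) hL
      refine ⟨hc, aux_squeeze _ (fun x =>
        (f i (xstar i) + ∑ u ∈ (G.neighborFinset i).erase j, JP t u i pstar (xstar i))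
          + g i j (xstar i) x) _ _ hc (fun x => (hL x).2 ⟨xstar i, rfl⟩) ?_
        ((hD2 i j h _ _).const_add _)⟩
      refine le_antisymm ((hL (xstar j)).2 ⟨xstar i, rfl⟩) ?_
      obtain ⟨y, hy⟩ := (hL (xstar j)).1
      rw [← hy]
      refine aux_min (fun y => (f i y + ∑ u ∈ (G.neighborFinset i).erase j, JP t u i pstar y)
        + g i j y (xstar j)) (xstar i) (hac.add (hg1conv i j h _)) ?_ y
      have hs : HasDerivAt (fun y => ∑ u ∈ (G.neighborFinset i).erase j, JP t u i pstar y)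
          (∑ u ∈ (G.neighborFinset i).erase j,
            deriv (fun b => g u i (xstar u) b) (xstar i)) (xstar i) :=
        HasDerivAt.fun_sum fun u hu =>
          (ih u i ((G.mem_neighborFinset i u).1 (Finset.mem_of_mem_erase hu)).symm).2
      have hall := ((hDf i (xstar i)).add hs).add (hD1 i j h (xstar i) (xstar j))
      refine HasDerivAt.congr_deriv hall ?_
      have hst := hstat i
      rw [← Finset.sum_erase_add _ _ ((G.mem_neighborFinset i j).2 h)] at hst
      linarith
  refine ⟨fun t i j h => (main t i j h).2, fun t j => ?_⟩
  by_contra hne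
  have hlt := hxEstP t j pstar (xstar j) (Ne.symm hne)
  refine absurd hlt (not_lt.2 ?_)
  refine aux_min (fun y => f j y + ∑ u ∈ G.neighborFinset j, JP t u j pstar y) (xstar j)
    ((hf_sconv j).convexOn.add (aux_sum_convex _ _ fun u hu =>
      (main t u j ((G.mem_neighborFinset j u).1 hu).symm).1)) ?_ _
  rw [← hstat j]
  exact (hDf j _).add (HasDerivAt.fun_sum fun u hu =>
    (main t u j ((G.mem_neighborFinset j u).1 hu).symm).2)
end

section
/- Consider a pairwise separable convex program whose objective F is (λ,w)-scaled diagonally dominant, with the perturbed min-sum algorithm and initial messages satisfying the initialization assumption. Then for every p ∈ ℝ^{E⃗}, every r ∈ V, every (u,v) ∈ E⃗, and every t ≥ 0, the map p ↦ x^{(t)}_r(p) is differentiable and | ∂x^{(t)}_r(p)/∂p_{u→v} | ≤ K · λ^t/(1−λ). -/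
open Filter Finset

theorem ift_global {E : Type*} [NormedAddCommGroup E] [NormedSpace ℝ E] [CompleteSpace E]
    (Φ : E × ℝ → ℝ) (hΦ : ContDiff ℝ 1 Φ) (hpos : ∀ q, 0 < fderiv ℝ Φ q (0, 1))
    (ψ : E → ℝ) (hψ : ∀ a, Φ (a, ψ a) = 0) :
    ContDiff ℝ 1 ψ ∧ ∀ a v, fderiv ℝ Φ (a, ψ a) (v, fderiv ℝ ψ a v) = 0 := by
  have hinj : ∀ a y z, Φ (a, y) = 0 → Φ (a, z) = 0 → y = z := by
    intro a y z hy hz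
    have hm : StrictMono (fun y => Φ (a, y)) := by
      apply strictMono_of_deriv_pos
      intro y
      have h1 : HasFDerivAt Φ (fderiv ℝ Φ (a, y)) (a, y) :=
        (hΦ.differentiable one_ne_zero _).hasFDerivAt
      have h2 : HasDerivAt (fun y : ℝ => (a, y)) ((0 : E), (1 : ℝ)) y :=
        (hasDerivAt_const y a).prodMk (hasDerivAt_id y)
      have h3 := h1.comp_hasDerivAt y h2
      have := hpos (a, y)
      rw [show (fun y => Φ (a, y)) = Φ ∘ (fun y : ℝ => (a, y)) from rfl, h3.deriv]
      exact this
    exact hm.injective (hy.trans hz.symm)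
  have hC : ContDiff ℝ 1 ψ := by
    rw [contDiff_iff_contDiffAt]
    intro a
    have cdf : ContDiffAt ℝ 1 Φ (a, ψ a) := hΦ.contDiffAt
    have inv : (fderiv ℝ Φ (a, ψ a) ∘L .inr ℝ E ℝ).IsInvertible := by
      have hp := (hpos (a, ψ a)).ne'
      refine ⟨ContinuousLinearEquiv.unitsEquivAut ℝ (Units.mk0 _ hp), ?_⟩
      ext
      simp [ContinuousLinearEquiv.unitsEquivAut]
    refine (cdf.contDiffAt_implicitFunction one_ne_zero inv).congr_of_eventuallyEq ?_
    filter_upwards [cdf.eventually_apply_implicitFunction one_ne_zero inv] with x hx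
    exact hinj x _ _ (hψ x) (hx.trans (hψ a))
  refine ⟨hC, fun a v => ?_⟩
  have h1 : HasFDerivAt Φ (fderiv ℝ Φ (a, ψ a)) (a, ψ a) :=
    (hΦ.differentiable one_ne_zero _).hasFDerivAt
  have h2 : HasFDerivAt ψ (fderiv ℝ ψ a) a := (hC.differentiable one_ne_zero _).hasFDerivAt
  have h3 := h1.comp a ((hasFDerivAt_id a).prodMk h2)
  have h4 : (Φ ∘ fun x => (id x, ψ x)) = fun _ => (0 : ℝ) := by
    funext x; exact hψ x
  have h5 := h3.unique (by
    have := hasFDerivAt_const (0 : ℝ) a (𝕜 := ℝ)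
    rw [← h4] at this; exact this)
  have := congrArg (fun L => L v) h5
  simpa using this

theorem node_h {V : Type*} (T : Finset V) (a b d : V → ℝ) (c kw wi lam M : ℝ)
    (hwi : 0 < wi) (hl1 : lam < 1) (hM : 0 < M)
    (h1 : ∑ u ∈ T, a u + kw ≤ lam * wi * (c + ∑ u ∈ T, b u))
    (h2 : M ≤ c + ∑ u ∈ T, b u)
    (h3 : ∀ u ∈ T, (b u - d u) * wi ≤ a u) :
    kw < wi * (c + ∑ u ∈ T, d u) := by
  have h4 := Finset.sum_le_sum h3
  rw [← Finset.sum_mul, Finset.sum_sub_distrib] at h4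
  have : 0 < (1 - lam) * wi * (c + ∑ u ∈ T, b u) := by
    have : 0 < 1 - lam := by linarith
    have : 0 < c + ∑ u ∈ T, b u := by linarith
    positivity
  nlinarith

theorem node_D0 {V : Type*} (T : Finset V) (a b d : V → ℝ) (c kw wi wm lam M K S : ℝ)
    (hwm : 0 < wm) (hwi : wm ≤ wi) (hl0 : 0 < lam) (hl1 : lam < 1) (hM : 0 < M)
    (hK : 1 ≤ K * (wm * M * (1 - lam))) (hK0 : 0 < K) (ha : ∀ u ∈ T, 0 ≤ a u)
    (h1 : ∑ u ∈ T, a u + kw ≤ lam * wi * (c + ∑ u ∈ T, b u))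
    (h2 : M ≤ c + ∑ u ∈ T, b u)
    (h3 : ∀ u ∈ T, b u ≤ d u) (hS : S ≤ 1) :
    S ≤ K * (wi * (c + ∑ u ∈ T, d u) - lam * kw) := by
  have h4 := Finset.sum_le_sum h3
  have h5 := Finset.sum_nonneg ha
  set H := c + ∑ u ∈ T, b u
  have h6 : wm * M ≤ wi * H := mul_le_mul hwi h2 hM.le (by linarith)
  have h7 : wi * H ≤ wi * (c + ∑ u ∈ T, d u) := by
    apply mul_le_mul_of_nonneg_left _ (by linarith)
    simp only [H]; linarith
  have h8 : lam * kw ≤ lam * (wi * H) := by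
    apply mul_le_mul_of_nonneg_left _ hl0.le
    have : 0 < wi * H := lt_of_lt_of_le (by positivity) h6
    nlinarith
  have h9 : wm * M * (1 - lam) ≤ wi * (c + ∑ u ∈ T, d u) - lam * kw := by
    nlinarith
  exact hS.trans (hK.trans (mul_le_mul_of_nonneg_left h9 hK0.le))

theorem node_D1 {V : Type*} (T : Finset V) (a b d D : V → ℝ) (c kw wi lam K : ℝ)
    (hl0 : 0 < lam) (hl1 : lam < 1) (hK0 : 0 < K) (hkw : 0 ≤ kw)
    (h1 : ∑ u ∈ T, a u + kw ≤ lam * wi * (c + ∑ u ∈ T, b u))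
    (h3 : ∀ u ∈ T, |D u| ≤ K * (a u - lam * (b u - d u) * wi)) :
    |∑ u ∈ T, D u| ≤ (K * lam) * (wi * (c + ∑ u ∈ T, d u) - lam * kw) := by
  refine (Finset.abs_sum_le_sum_abs _ _).trans ((Finset.sum_le_sum h3).trans ?_)
  rw [← Finset.mul_sum, Finset.sum_sub_distrib, ← Finset.sum_mul, ← Finset.mul_sum,
    Finset.sum_sub_distrib, mul_assoc K lam]
  apply mul_le_mul_of_nonneg_left _ hK0.le
  have : lam * lam * kw ≤ kw := by
    have : lam * lam ≤ 1 := by nlinarith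
    nlinarith
  nlinarith

theorem step_alg (κ h S K wi wj lam : ℝ) (hh : 0 < h)
    (hS : |S| ≤ K * (wi * h - lam * (wj * |κ|))) :
    |κ * (-S / h)| ≤ K * (|κ| * wi - lam * (κ * κ / h) * wj) := by
  rw [abs_mul, abs_div, abs_neg, abs_of_pos hh]
  have e : K * (|κ| * wi - lam * (κ * κ / h) * wj) =
      |κ| * ((K * (wi * h - lam * (wj * |κ|))) / h) := by
    rw [← abs_mul_abs_self κ]; field_simp
  rw [e]
  gcongr

theorem hasFDerivAt_snd_comp {E : Type*} [NormedAddCommGroup E] [NormedSpace ℝ E]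
    (φ : ℝ → ℝ) (q : E × ℝ) (h : DifferentiableAt ℝ φ q.2) :
    HasFDerivAt (fun q : E × ℝ => φ q.2) (deriv φ q.2 • ContinuousLinearMap.snd ℝ E ℝ) q :=
  HasDerivAt.comp_hasFDerivAt (f := Prod.snd) q h.hasDerivAt hasFDerivAt_snd

/-- The analytic data extracted from the program. -/
structure MSData {V : Type*} [Fintype V] [DecidableEq V]
    (G : SimpleGraph V) [DecidableRel G.Adj]
    (f f' : V → ℝ → ℝ) (g : V → V → ℝ → ℝ → ℝ) (k : V → V → ℝ × ℝ → ℝ)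
    (M lam wm K : ℝ) (w : V → ℝ) : Prop where
  hf : ∀ i y, HasDerivAt (f i) (f' i y) y
  hf' : ∀ i, ContDiff ℝ 1 (f' i)
  hg : ∀ i j, G.Adj i j → ∀ q : ℝ × ℝ, HasFDerivAt (fun q : ℝ × ℝ => g i j q.1 q.2)
    (k j i (q.2, q.1) • ContinuousLinearMap.fst ℝ ℝ ℝ +
      k i j q • ContinuousLinearMap.snd ℝ ℝ ℝ) q
  hk : ∀ i j, G.Adj i j → ContDiff ℝ 1 (k i j)
  hsym : ∀ i j, G.Adj i j → ∀ a b : ℝ,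
    fderiv ℝ (k i j) (a, b) (1, 0) = fderiv ℝ (k j i) (b, a) (1, 0)
  hM : 0 < M
  hl0 : 0 < lam
  hl1 : lam < 1
  hwm : 0 < wm
  hw : ∀ i, wm ≤ w i
  hK0 : 0 < K
  hK : 1 ≤ K * (wm * M * (1 - lam))
  hMle : ∀ i (z : V → ℝ) (y : ℝ),
    M ≤ deriv (f' i) y + ∑ u ∈ G.neighborFinset i, fderiv ℝ (k u i) (z u, y) (0, 1)
  hdd : ∀ i (z : V → ℝ) (y : ℝ),
    ∑ u ∈ G.neighborFinset i, w u * |fderiv ℝ (k u i) (z u, y) (1, 0)| ≤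
      lam * w i * (deriv (f' i) y +
        ∑ u ∈ G.neighborFinset i, fderiv ℝ (k u i) (z u, y) (0, 1))

/-- The quantitative invariant attached to a message. -/
def MSGood {V : Type*} [DecidableEq V] {G : SimpleGraph V} (k : V → V → ℝ × ℝ → ℝ)
    (lam K : ℝ) (w : V → ℝ) (t : ℕ) (i j : V) (x d : ℝ) (D : EdgeDir G → ℝ) : Prop :=
  ∃ z : ℝ,
    (fderiv ℝ (k i j) (z, x) (0, 1) - d) * w j ≤ w i * |fderiv ℝ (k i j) (z, x) (1, 0)| ∧
    match t with
    | 0 => fderiv ℝ (k i j) (z, x) (0, 1) ≤ d ∧ ∀ e, D e = if e.1 = (i, j) then 1 else 0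
    | t + 1 => ∀ e, |D e| ≤ K * lam ^ t * (w i * |fderiv ℝ (k i j) (z, x) (1, 0)| -
        lam * (fderiv ℝ (k i j) (z, x) (0, 1) - d) * w j)

theorem delta_sum {V : Type*} [DecidableEq V] {G : SimpleGraph V} (T : Finset V) (i : V)
    (e : EdgeDir G) : |∑ u ∈ T, (if e.1 = (u, i) then (1 : ℝ) else 0)| ≤ 1 := by
  have : ∀ u ∈ T, (if e.1 = (u, i) then (1 : ℝ) else 0) =
      if e.1.1 = u then (if e.1.2 = i then 1 else 0) else 0 := by
    intro u _
    simp only [Prod.ext_iff]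
    by_cases h1 : e.1.1 = u <;> by_cases h2 : e.1.2 = i <;> simp [h1, h2]
  rw [Finset.sum_congr rfl this, Finset.sum_ite_eq]
  split_ifs <;> simp

/-- Node estimate: combination of the children of a node. -/
theorem node_all {V : Type*} [DecidableEq V] {G : SimpleGraph V} (k : V → V → ℝ × ℝ → ℝ)
    (lam K M wm : ℝ) (w : V → ℝ) (t : ℕ) (i : V) (y : ℝ) (T : Finset V)
    (d : V → ℝ) (D : V → EdgeDir G → ℝ) (c kw : ℝ)
    (hM : 0 < M) (hl0 : 0 < lam) (hl1 : lam < 1) (hwm : 0 < wm) (hw : ∀ i, wm ≤ w i)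
    (hK0 : 0 < K) (hK : 1 ≤ K * (wm * M * (1 - lam))) (hkw : 0 ≤ kw)
    (hgood : ∀ u ∈ T, MSGood k lam K w t u i y (d u) (D u))
    (h2 : ∀ z : V → ℝ, M ≤ c + ∑ u ∈ T, fderiv ℝ (k u i) (z u, y) (0, 1))
    (h1 : ∀ z : V → ℝ, ∑ u ∈ T, w u * |fderiv ℝ (k u i) (z u, y) (1, 0)| + kw ≤
      lam * w i * (c + ∑ u ∈ T, fderiv ℝ (k u i) (z u, y) (0, 1))) :
    kw < w i * (c + ∑ u ∈ T, d u) ∧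
    ∀ e, |∑ u ∈ T, D u e| ≤ K * lam ^ t * (w i * (c + ∑ u ∈ T, d u) - lam * kw) := by
  choose! z hz using hgood
  have hwi : 0 < w i := lt_of_lt_of_le hwm (hw i)
  refine ⟨node_h T _ _ d c kw (w i) lam M hwi hl1 hM (h1 z) (h2 z) (fun u hu => (hz u hu).1), ?_⟩
  intro e
  cases t with
  | zero =>
    simp only [pow_zero, mul_one]
    refine node_D0 T _ _ d c kw (w i) wm lam M K _ hwm (hw i) hl0 hl1 hM hK hK0 ?_
      (h1 z) (h2 z) (fun u hu => (hz u hu).2.1) ?_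
    · intro u _
      exact mul_nonneg (hwm.le.trans (hw u)) (abs_nonneg _)
    · rw [Finset.sum_congr rfl (fun u hu => (hz u hu).2.2 e)]
      exact delta_sum T i e
  | succ t =>
    rw [pow_succ, ← mul_assoc]
    exact node_D1 T _ _ d (fun u => D u e) c kw (w i) lam (K * lam ^ t) hl0 hl1
      (by positivity) hkw (h1 z) (fun u hu => (hz u hu).2 e)

/-- The invariant for a message function. -/
def MSInv {V : Type*} [Fintype V] [DecidableEq V] {G : SimpleGraph V} [DecidableRel G.Adj]
    (k : V → V → ℝ × ℝ → ℝ)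
    (lam K : ℝ) (w : V → ℝ) (t : ℕ) (i j : V) (J : (EdgeDir G → ℝ) → ℝ → ℝ)
    (m : (EdgeDir G → ℝ) × ℝ → ℝ) : Prop :=
  ContDiff ℝ 1 m ∧ (∀ p x, HasDerivAt (J p) (m (p, x)) x) ∧
    ∀ p x, MSGood (G := G) k lam K w t i j x (fderiv ℝ m (p, x) (0, 1))
      (fun e => fderiv ℝ m (p, x) (Pi.single e 1, 0))

theorem ms_root {V : Type*} [Fintype V] [DecidableEq V]
    {G : SimpleGraph V} [DecidableRel G.Adj]
    {f f' : V → ℝ → ℝ} {g : V → V → ℝ → ℝ → ℝ} {k : V → V → ℝ × ℝ → ℝ}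
    {M lam wm K : ℝ} {w : V → ℝ} (H : MSData G f f' g k M lam wm K w)
    (t : ℕ) (i : V) (J : V → (EdgeDir G → ℝ) → ℝ → ℝ)
    (hJ : ∀ u ∈ G.neighborFinset i, ∃ m, MSInv k lam K w t u i (J u) m)
    (X : (EdgeDir G → ℝ) → ℝ)
    (hX : ∀ (p : EdgeDir G → ℝ) (y : ℝ),
      f i (X p) + ∑ u ∈ G.neighborFinset i, J u p (X p) ≤
        f i y + ∑ u ∈ G.neighborFinset i, J u p y) :
    Differentiable ℝ X ∧ ∀ p e, |fderiv ℝ X p (Pi.single e 1)| ≤ K * lam ^ t * w i := by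
  choose! m hm using hJ
  let Φ : (EdgeDir G → ℝ) × ℝ → ℝ := fun q => f' i q.2 + ∑ u ∈ G.neighborFinset i, m u q
  have hΦ : ContDiff ℝ 1 Φ := by
    refine ((H.hf' i).comp contDiff_snd).add (ContDiff.sum fun u hu => (hm u hu).1)
  have hder : ∀ q v, fderiv ℝ Φ q v = deriv (f' i) q.2 * v.2 +
      ∑ u ∈ G.neighborFinset i, fderiv ℝ (m u) q v := by
    intro q v
    have h1 : HasFDerivAt (fun q : (EdgeDir G → ℝ) × ℝ => f' i q.2) _ q :=
      hasFDerivAt_snd_comp _ q ((H.hf' i).differentiable one_ne_zero q.2)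
    have h2 : HasFDerivAt (fun q => ∑ u ∈ G.neighborFinset i, m u q) _ q :=
      HasFDerivAt.fun_sum (fun u hu => (((hm u hu).1).differentiable one_ne_zero q).hasFDerivAt)
    have h3 : HasFDerivAt Φ _ q := h1.add h2
    rw [h3.fderiv]
    simp
  have node := fun (p : EdgeDir G → ℝ) (y : ℝ) =>
    node_all (G := G) k lam K M wm w t i y (G.neighborFinset i)
      (fun u => fderiv ℝ (m u) (p, y) (0, 1))
      (fun u e => fderiv ℝ (m u) (p, y) (Pi.single e 1, 0)) (deriv (f' i) y) 0
      H.hM H.hl0 H.hl1 H.hwm H.hw H.hK0 H.hK le_rfl (fun u hu => (hm u hu).2.2 p y)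
      (fun z => H.hMle i z y) (fun z => by simpa using H.hdd i z y)
  have hwi : 0 < w i := lt_of_lt_of_le H.hwm (H.hw i)
  have hpos : ∀ q, 0 < fderiv ℝ Φ q (0, 1) := by
    rintro ⟨p, y⟩
    rw [hder]
    have := (node p y).1
    simp only [mul_one]
    exact pos_of_mul_pos_right this hwi.le
  have hzero : ∀ p, Φ (p, X p) = 0 := by
    intro p
    have h1 : HasDerivAt (fun y => f i y + ∑ u ∈ G.neighborFinset i, J u p y)
        (Φ (p, X p)) (X p) :=
      (H.hf i _).add (HasDerivAt.fun_sum fun u hu => (hm u hu).2.1 p (X p))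
    refine IsLocalMin.hasDerivAt_eq_zero (Eventually.of_forall fun y => hX p y) h1
  obtain ⟨hC, hE⟩ := ift_global Φ hΦ hpos X hzero
  refine ⟨hC.differentiable one_ne_zero, fun p e => ?_⟩
  have h1 := hE p (Pi.single e 1)
  set s := fderiv ℝ X p (Pi.single e 1) with hs
  have hsplit : ((Pi.single e (1:ℝ) : EdgeDir G → ℝ), s) =
    (Pi.single e 1, 0) + s • ((0 : EdgeDir G → ℝ), (1 : ℝ)) := by simp
  rw [hsplit, map_add, map_smul, hder (p, X p) (Pi.single e 1, 0)] at h1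
  have h2 := (node p (X p)).2 e
  have h3 := hpos (p, X p)
  have h4 := hder (p, X p) (0, 1)
  simp only [mul_one, mul_zero, sub_zero, zero_add, smul_eq_mul] at h1 h2 h4
  rw [← h4, eq_neg_of_add_eq_zero_left h1, abs_neg, abs_mul, abs_of_pos h3] at h2
  have h5 : |s| * fderiv ℝ Φ (p, X p) (0, 1) ≤
    (K * lam ^ t * w i) * fderiv ℝ Φ (p, X p) (0, 1) := by linarith
  exact le_of_mul_le_mul_right h5 h3

theorem ms_step {V : Type*} [Fintype V] [DecidableEq V]
    {G : SimpleGraph V} [DecidableRel G.Adj]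
    {f f' : V → ℝ → ℝ} {g : V → V → ℝ → ℝ → ℝ} {k : V → V → ℝ × ℝ → ℝ}
    {M lam wm K : ℝ} {w : V → ℝ} (H : MSData G f f' g k M lam wm K w)
    (t : ℕ) (i j : V) (hij : G.Adj i j) (J : V → (EdgeDir G → ℝ) → ℝ → ℝ)
    (hJ : ∀ u ∈ (G.neighborFinset i).erase j, ∃ m, MSInv k lam K w t u i (J u) m)
    (J' : (EdgeDir G → ℝ) → ℝ → ℝ)
    (hJ' : ∀ (p : EdgeDir G → ℝ) (xj : ℝ),
      IsLeast (Set.range fun y : ℝ =>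
          f i y + g i j y xj + ∑ u ∈ (G.neighborFinset i).erase j, J u p y)
        (J' p xj)) :
    ∃ m, MSInv k lam K w (t + 1) i j J' m := by
  choose! m hm using hJ
  have hX : ∀ a : (EdgeDir G → ℝ) × ℝ, ∃ y : ℝ,
    f i y + g i j y a.2 + ∑ u ∈ (G.neighborFinset i).erase j, J u a.1 y = J' a.1 a.2 := by
    intro a
    exact (hJ' a.1 a.2).1
  choose X hX using hX
  have hji : G.Adj j i := hij.symm
  let Φ : ((EdgeDir G → ℝ) × ℝ) × ℝ → ℝ := fun q => f' i q.2 + k j i (q.1.2, q.2) +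
    ∑ u ∈ (G.neighborFinset i).erase j, m u (q.1.1, q.2)
  have hΦ : ContDiff ℝ 1 Φ := by
    refine (((H.hf' i).comp contDiff_snd).add ((H.hk j i hji).comp (by fun_prop))).add
      (ContDiff.sum fun u hu => (hm u hu).1.comp (by fun_prop))
  have hder : ∀ (q v : ((EdgeDir G → ℝ) × ℝ) × ℝ), fderiv ℝ Φ q v = deriv (f' i) q.2 * v.2 +
      fderiv ℝ (k j i) (q.1.2, q.2) (v.1.2, v.2) +
      ∑ u ∈ (G.neighborFinset i).erase j, fderiv ℝ (m u) (q.1.1, q.2) (v.1.1, v.2) := by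
    intro q v
    have h1 : HasFDerivAt (fun q : ((EdgeDir G → ℝ) × ℝ) × ℝ => f' i q.2) _ q :=
      hasFDerivAt_snd_comp _ q ((H.hf' i).differentiable one_ne_zero q.2)
    have hA : HasFDerivAt (fun q : ((EdgeDir G → ℝ) × ℝ) × ℝ => (q.1.2, q.2)) _ q :=
      (((ContinuousLinearMap.snd ℝ (EdgeDir G → ℝ) ℝ).comp
        (ContinuousLinearMap.fst ℝ ((EdgeDir G → ℝ) × ℝ) ℝ)).prod
        (ContinuousLinearMap.snd ℝ ((EdgeDir G → ℝ) × ℝ) ℝ)).hasFDerivAt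
    have hB : HasFDerivAt (fun q : ((EdgeDir G → ℝ) × ℝ) × ℝ => (q.1.1, q.2)) _ q :=
      (((ContinuousLinearMap.fst ℝ (EdgeDir G → ℝ) ℝ).comp
        (ContinuousLinearMap.fst ℝ ((EdgeDir G → ℝ) × ℝ) ℝ)).prod
        (ContinuousLinearMap.snd ℝ ((EdgeDir G → ℝ) × ℝ) ℝ)).hasFDerivAt
    have h1' : HasFDerivAt (fun q : ((EdgeDir G → ℝ) × ℝ) × ℝ => k j i (q.1.2, q.2)) _ q :=
      (((H.hk j i hji).differentiable one_ne_zero (q.1.2, q.2)).hasFDerivAt).comp q hA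
    have h2 : HasFDerivAt (fun q : ((EdgeDir G → ℝ) × ℝ) × ℝ =>
        ∑ u ∈ (G.neighborFinset i).erase j, m u (q.1.1, q.2)) _ q :=
      HasFDerivAt.fun_sum (fun u hu =>
        (((hm u hu).1).differentiable one_ne_zero (q.1.1, q.2)).hasFDerivAt.comp q hB)
    have h3 : HasFDerivAt Φ _ q := (h1.add h1').add h2
    rw [h3.fderiv]
    simp
  have hjmem : j ∈ G.neighborFinset i := by simpa using hij
  have key : ∀ (F : V → ℝ → ℝ) (z : V → ℝ) (x : ℝ),
      ∑ u ∈ G.neighborFinset i, F u (Function.update z j x u) =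
        F j x + ∑ u ∈ (G.neighborFinset i).erase j, F u (z u) := by
    intro F z x
    rw [← Finset.add_sum_erase _ _ hjmem, Function.update_self]
    congr 1
    refine Finset.sum_congr rfl fun u hu => ?_
    rw [Function.update_of_ne (Finset.ne_of_mem_erase hu)]
  have hwj : 0 < w j := lt_of_lt_of_le H.hwm (H.hw j)
  have node := fun (p : EdgeDir G → ℝ) (x y : ℝ) =>
    node_all (G := G) k lam K M wm w t i y ((G.neighborFinset i).erase j)
      (fun u => fderiv ℝ (m u) (p, y) (0, 1))
      (fun u e => fderiv ℝ (m u) (p, y) (Pi.single e 1, 0))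
      (deriv (f' i) y + fderiv ℝ (k j i) (x, y) (0, 1))
      (w j * |fderiv ℝ (k j i) (x, y) (1, 0)|)
      H.hM H.hl0 H.hl1 H.hwm H.hw H.hK0 H.hK (by positivity) (fun u hu => (hm u hu).2.2 p y)
      (fun z => by
        have := H.hMle i (Function.update z j x) y
        rw [key (fun u a => fderiv ℝ (k u i) (a, y) (0, 1))] at this
        linarith)
      (fun z => by
        have := H.hdd i (Function.update z j x) y
        rw [key (fun u a => fderiv ℝ (k u i) (a, y) (0, 1)),
          key (fun u a => w u * |fderiv ℝ (k u i) (a, y) (1, 0)|)] at this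
        rw [add_comm, add_assoc]
        exact this)
  have hwi : 0 < w i := lt_of_lt_of_le H.hwm (H.hw i)
  have hpos : ∀ q, 0 < fderiv ℝ Φ q (0, 1) := by
    rintro ⟨⟨p, x⟩, y⟩
    rw [hder]
    have := (node p x y).1
    simp only [mul_one]
    refine pos_of_mul_pos_right (lt_of_le_of_lt ?_ this) hwi.le
    positivity
  have hzero : ∀ a, Φ (a, X a) = 0 := by
    rintro ⟨p, x⟩
    have hgd : HasDerivAt (fun y => g i j y x) (k j i (x, X (p, x))) (X (p, x)) := by
      have h0 : HasDerivAt (fun y : ℝ => (y, x)) ((1 : ℝ), (0 : ℝ)) (X (p, x)) :=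
        (hasDerivAt_id _).prodMk (hasDerivAt_const _ x)
      have := (H.hg i j hij (X (p, x), x)).comp_hasDerivAt (X (p, x)) h0
      simpa [Function.comp_def] using this
    have h1 : HasDerivAt
        (fun y => f i y + g i j y x + ∑ u ∈ (G.neighborFinset i).erase j, J u p y)
        (Φ ((p, x), X (p, x))) (X (p, x)) :=
      ((H.hf i _).add hgd).add (HasDerivAt.fun_sum fun u hu => (hm u hu).2.1 p (X (p, x)))
    refine IsLocalMin.hasDerivAt_eq_zero (Eventually.of_forall fun y => ?_) h1
    have := hX (p, x)
    dsimp only at this ⊢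
    rw [this]
    exact (hJ' p x).2 ⟨y, rfl⟩
  obtain ⟨hC, hE⟩ := ift_global Φ hΦ hpos X hzero
  have hXd : ∀ a, HasFDerivAt X (fderiv ℝ X a) a :=
    fun a => (hC.differentiable one_ne_zero a).hasFDerivAt
  refine ⟨fun a => k i j (X a, a.2), (H.hk i j hij).comp (hC.prodMk contDiff_snd), ?_, ?_⟩
  · intro p x
    -- envelope theorem
    have hx : HasDerivAt (fun x : ℝ => (p, x)) ((0 : EdgeDir G → ℝ), (1 : ℝ)) x :=
      (hasDerivAt_const x p).prodMk (hasDerivAt_id x)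
    have hY : HasDerivAt (fun x : ℝ => X (p, x)) (fderiv ℝ X (p, x) (0, 1)) x :=
      (hXd (p, x)).comp_hasDerivAt x hx
    set s := fderiv ℝ X (p, x) (0, 1) with hs
    have h1 : HasDerivAt (fun x => f i (X (p, x))) (f' i (X (p, x)) * s) x :=
      (H.hf i _).comp x hY
    have h2 : HasDerivAt (fun x => g i j (X (p, x)) x)
        (k j i (x, X (p, x)) * s + k i j (X (p, x), x)) x := by
      have h0 : HasDerivAt (fun x : ℝ => (X (p, x), x)) (s, (1 : ℝ)) x :=
        hY.prodMk (hasDerivAt_id x)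
      have := HasFDerivAt.comp_hasDerivAt (f := fun x : ℝ => (X (p, x), x)) x
        (H.hg i j hij (X (p, x), x)) h0
      simpa [Function.comp_def] using this
    have h3 : HasDerivAt (fun x => ∑ u ∈ (G.neighborFinset i).erase j, J u p (X (p, x)))
        (∑ u ∈ (G.neighborFinset i).erase j, m u (p, X (p, x)) * s) x :=
      HasDerivAt.fun_sum fun u hu => ((hm u hu).2.1 p (X (p, x))).comp x hY
    have h4 := (h1.add h2).add h3
    have h5 : J' p = fun x => f i (X (p, x)) + g i j (X (p, x)) x +
        ∑ u ∈ (G.neighborFinset i).erase j, J u p (X (p, x)) := by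
      funext x; exact (hX (p, x)).symm
    rw [h5]
    refine h4.congr_deriv ?_
    have h6 := hzero (p, x)
    simp only [Φ] at h6
    rw [← Finset.sum_mul]
    linear_combination s * h6
  · intro p x
    have hmd : ∀ v : (EdgeDir G → ℝ) × ℝ,
        fderiv ℝ (fun a : (EdgeDir G → ℝ) × ℝ => k i j (X a, a.2)) (p, x) v =
        fderiv ℝ (k i j) (X (p, x), x) (1, 0) * fderiv ℝ X (p, x) v +
        fderiv ℝ (k i j) (X (p, x), x) (0, 1) * v.2 := by
      intro v
      have h1 : HasFDerivAt (fun a : (EdgeDir G → ℝ) × ℝ => k i j (X a, a.2)) _ (p, x) :=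
        (((H.hk i j hij).differentiable one_ne_zero (X (p, x), x)).hasFDerivAt).comp (p, x)
          ((hXd (p, x)).prodMk hasFDerivAt_snd)
      rw [h1.fderiv]
      have hsplit : ∀ a b : ℝ, ((a, b) : ℝ × ℝ) = a • (1, 0) + b • (0, 1) := by
        intro a b; simp
      simp only [ContinuousLinearMap.comp_apply, ContinuousLinearMap.prod_apply,
        ContinuousLinearMap.coe_snd']
      rw [hsplit (fderiv ℝ X (p, x) v) v.2, map_add, map_smul, map_smul, smul_eq_mul, smul_eq_mul]
      ring
    have hsy := H.hsym i j hij (X (p, x)) x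
    set κ := fderiv ℝ (k i j) (X (p, x), x) (1, 0) with hκ
    set h := fderiv ℝ Φ ((p, x), X (p, x)) (0, 1) with hh
    have hhpos : 0 < h := hpos _
    have hheq := hder ((p, x), X (p, x)) (0, 1)
    have hsol : ∀ v : (EdgeDir G → ℝ) × ℝ,
        fderiv ℝ X (p, x) v = -fderiv ℝ Φ ((p, x), X (p, x)) (v, 0) / h := by
      intro v
      have h1 := hE (p, x) v
      set s := fderiv ℝ X (p, x) v
      have hsplit : (v, s) = (v, 0) + s • ((0 : (EdgeDir G → ℝ) × ℝ), (1 : ℝ)) := by simp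
      rw [hsplit, map_add, map_smul, ← hh, smul_eq_mul] at h1
      field_simp
      linarith
    have hn := node p x (X (p, x))
    rw [← hsy] at hn
    have hheq' : h = deriv (f' i) (X (p, x)) + fderiv ℝ (k j i) (x, X (p, x)) (0, 1) +
        ∑ u ∈ (G.neighborFinset i).erase j, fderiv ℝ (m u) (p, X (p, x)) (0, 1) := by
      rw [hh, hheq]; simp
    rw [← hheq'] at hn
    have hdx : fderiv ℝ X (p, x) (0, 1) = -κ / h := by
      rw [hsol, hder]
      have : ((0 : EdgeDir G → ℝ), (0 : ℝ)) = 0 := rfl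
      simp [← hsy, this]
    have hdp : ∀ e, fderiv ℝ X (p, x) (Pi.single e 1, 0) =
        -(∑ u ∈ (G.neighborFinset i).erase j,
          fderiv ℝ (m u) (p, X (p, x)) (Pi.single e 1, 0)) / h := by
      intro e
      rw [hsol, hder]
      have : ((0 : ℝ), (0 : ℝ)) = 0 := rfl
      simp [this]
    have hgam : fderiv ℝ (k i j) (X (p, x), x) (0, 1) -
        (κ * (-κ / h) + fderiv ℝ (k i j) (X (p, x), x) (0, 1) * 1) = κ * κ / h := by ring
    refine ⟨X (p, x), ?_, ?_⟩
    · rw [hmd, hdx, hgam, ← hκ, div_mul_eq_mul_div, div_le_iff₀ hhpos, ← abs_mul_abs_self κ]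
      have := mul_le_mul_of_nonneg_left hn.1.le (abs_nonneg κ)
      linarith
    · intro e
      dsimp only
      rw [hmd, hmd, hdx, hgam, hdp, ← hκ, mul_zero, add_zero, mul_comm (w i) |κ|]
      exact step_alg κ h _ _ (w i) (w j) lam hhpos (hn.2 e)

theorem ms_zero {V : Type*} [Fintype V] [DecidableEq V]
    {G : SimpleGraph V} [DecidableRel G.Adj]
    {f f' : V → ℝ → ℝ} {g : V → V → ℝ → ℝ → ℝ} {k : V → V → ℝ × ℝ → ℝ}
    {M lam wm K : ℝ} {w : V → ℝ} (H : MSData G f f' g k M lam wm K w)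
    (i j : V) (hij : G.Adj i j) (J0 : ℝ → ℝ) (hJ0 : ContDiff ℝ 2 J0)
    (hJ0c : ∃ z : ℝ, ∀ x : ℝ, fderiv ℝ (k i j) (z, x) (0, 1) ≤ deriv (deriv J0) x)
    (J : (EdgeDir G → ℝ) → ℝ → ℝ)
    (hJ : ∀ p x, J p x = J0 x + p ⟨(i, j), hij⟩ * x) :
    ∃ m, MSInv k lam K w 0 i j J m := by
  obtain ⟨z, hz⟩ := hJ0c
  have hd1 : ContDiff ℝ 1 (deriv J0) := by
    have : ContDiff ℝ (1 + 1) J0 := by norm_num; exact hJ0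
    exact (contDiff_succ_iff_deriv.1 this).2.2
  let e0 : EdgeDir G := ⟨(i, j), hij⟩
  have hm : ∀ q v : (EdgeDir G → ℝ) × ℝ,
      fderiv ℝ (fun q : (EdgeDir G → ℝ) × ℝ => deriv J0 q.2 + q.1 e0) q v =
        deriv (deriv J0) q.2 * v.2 + v.1 e0 := by
    intro q v
    have h1 : HasFDerivAt (fun q : (EdgeDir G → ℝ) × ℝ => deriv J0 q.2) _ q :=
      hasFDerivAt_snd_comp _ q (hd1.differentiable one_ne_zero q.2)
    have h2 : HasFDerivAt (fun q : (EdgeDir G → ℝ) × ℝ => q.1 e0) _ q :=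
      (ContinuousLinearMap.proj (R := ℝ) (φ := fun _ : EdgeDir G => ℝ) e0).hasFDerivAt.comp q
        hasFDerivAt_fst
    have h3 := h1.add h2
    have h4 : HasFDerivAt (fun q : (EdgeDir G → ℝ) × ℝ => deriv J0 q.2 + q.1 e0) _ q := h3
    rw [h4.fderiv]
    simp
  refine ⟨fun q => deriv J0 q.2 + q.1 e0, ?_, ?_, ?_⟩
  · exact (hd1.comp contDiff_snd).add (by fun_prop)
  · intro p x
    have h1 : HasDerivAt (fun x => J0 x + p e0 * x) (deriv J0 x + p e0 * 1) x :=
      (hJ0.differentiable two_ne_zero x).hasDerivAt.add ((hasDerivAt_id x).const_mul _)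
    have h2 : J p = fun x => J0 x + p e0 * x := funext (hJ p)
    rw [h2]
    simpa using h1
  · intro p x
    have hzx := hz x
    have hwi : 0 ≤ w i := H.hwm.le.trans (H.hw i)
    have hwj : 0 ≤ w j := H.hwm.le.trans (H.hw j)
    refine ⟨z, ?_, ?_, ?_⟩
    · rw [hm]
      simp only [mul_one, Pi.zero_apply, add_zero]
      refine le_trans (mul_nonpos_of_nonpos_of_nonneg (by linarith) hwj) (by positivity)
    · rw [hm]; simpa using hzx
    · intro e
      dsimp only
      rw [hm]
      simp only [mul_zero, zero_add, Pi.single_apply, e0, Subtype.ext_iff, eq_comm]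

theorem hasDerivAt_update_coord {V : Type*} [DecidableEq V] (x : V → ℝ) (j i : V) (y : ℝ) :
    HasDerivAt (fun y => Function.update x j y i) (if i = j then 1 else 0) y := by
  by_cases h : i = j
  · subst h; simpa using hasDerivAt_id' y
  · simpa [h] using hasDerivAt_const y (x i)

theorem pair_contDiff (φ : ℝ × ℝ → ℝ) (hφ : ContDiff ℝ 2 φ) (v : ℝ × ℝ) :
    ContDiff ℝ 1 (fun q => fderiv ℝ φ q v) :=
  (hφ.fderiv_right (m := 1) (by norm_num)).clm_apply contDiff_const

theorem pair_fderiv2 (φ : ℝ × ℝ → ℝ) (hφ : ContDiff ℝ 2 φ) (q v u : ℝ × ℝ) :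
    fderiv ℝ (fun q => fderiv ℝ φ q v) q u = fderiv ℝ (fderiv ℝ φ) q u v := by
  have h1 : ContDiff ℝ 1 (fderiv ℝ φ) := hφ.fderiv_right (m := 1) (by norm_num)
  have h2 := (h1.differentiable one_ne_zero q).hasFDerivAt.clm_apply
    (hasFDerivAt_const v q)
  rw [h2.fderiv]
  simp

theorem pair_symm (φ : ℝ × ℝ → ℝ) (hφ : ContDiff ℝ 2 φ) (q v u : ℝ × ℝ) :
    fderiv ℝ (fderiv ℝ φ) q u v = fderiv ℝ (fderiv ℝ φ) q v u := by
  have := (hφ.contDiffAt (x := q)).isSymmSndFDerivAt (by simp)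
  exact this u v

/-- first derivative in the second coordinate -/
noncomputable def kfun {V : Type*} (g : V → V → ℝ → ℝ → ℝ) (i j : V) (q : ℝ × ℝ) : ℝ :=
  fderiv ℝ (fun q : ℝ × ℝ => g i j q.1 q.2) q (0, 1)

theorem kfun_swap {V : Type*} (g : V → V → ℝ → ℝ → ℝ) (i j : V)
    (h1 : ContDiff ℝ 2 (fun q : ℝ × ℝ => g i j q.1 q.2))
    (hs : ∀ a b : ℝ, g j i a b = g i j b a) (q : ℝ × ℝ) :
    kfun g j i q = fderiv ℝ (fun q : ℝ × ℝ => g i j q.1 q.2) (q.2, q.1) (1, 0) := by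
  unfold kfun
  have e : (fun q : ℝ × ℝ => g j i q.1 q.2) =
      (fun q : ℝ × ℝ => g i j q.1 q.2) ∘ (fun q : ℝ × ℝ => (q.2, q.1)) := by
    funext q; exact hs _ _
  have hsw : HasFDerivAt (fun q : ℝ × ℝ => (q.2, q.1)) ((ContinuousLinearMap.snd ℝ ℝ ℝ).prod
      (ContinuousLinearMap.fst ℝ ℝ ℝ)) q :=
    ((ContinuousLinearMap.snd ℝ ℝ ℝ).prod (ContinuousLinearMap.fst ℝ ℝ ℝ)).hasFDerivAt
  have h2 := ((h1.differentiable two_ne_zero (q.2, q.1)).hasFDerivAt).comp q hsw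
  rw [e, h2.fderiv]
  simp

theorem kfun_hg {V : Type*} (g : V → V → ℝ → ℝ → ℝ) (i j : V)
    (h1 : ContDiff ℝ 2 (fun q : ℝ × ℝ => g i j q.1 q.2))
    (hs : ∀ a b : ℝ, g j i a b = g i j b a) (q : ℝ × ℝ) :
    HasFDerivAt (fun q : ℝ × ℝ => g i j q.1 q.2)
    (kfun g j i (q.2, q.1) • ContinuousLinearMap.fst ℝ ℝ ℝ +
      kfun g i j q • ContinuousLinearMap.snd ℝ ℝ ℝ) q := by
  have h := (h1.differentiable two_ne_zero q).hasFDerivAt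
  convert! h using 1
  rw [kfun_swap g i j h1 hs, kfun]
  ext <;> simp

theorem kfun_hsym {V : Type*} (g : V → V → ℝ → ℝ → ℝ) (i j : V)
    (h1 : ContDiff ℝ 2 (fun q : ℝ × ℝ => g i j q.1 q.2))
    (hs : ∀ a b : ℝ, g j i a b = g i j b a) (a b : ℝ) :
    fderiv ℝ (kfun g i j) (a, b) (1, 0) = fderiv ℝ (kfun g j i) (b, a) (1, 0) := by
  have e : kfun g j i = (fun q => fderiv ℝ (fun q : ℝ × ℝ => g i j q.1 q.2) q (1, 0)) ∘
      (fun q : ℝ × ℝ => (q.2, q.1)) := by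
    funext q; exact kfun_swap g i j h1 hs q
  have hsw : HasFDerivAt (fun q : ℝ × ℝ => (q.2, q.1)) ((ContinuousLinearMap.snd ℝ ℝ ℝ).prod
      (ContinuousLinearMap.fst ℝ ℝ ℝ)) (b, a) :=
    ((ContinuousLinearMap.snd ℝ ℝ ℝ).prod (ContinuousLinearMap.fst ℝ ℝ ℝ)).hasFDerivAt
  have h2 := (((pair_contDiff _ h1 (1, 0)).differentiable one_ne_zero (a, b)).hasFDerivAt).comp
    (b, a) hsw
  rw [e, h2.fderiv]
  simp only [ContinuousLinearMap.comp_apply, ContinuousLinearMap.prod_apply,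
    ContinuousLinearMap.coe_snd', ContinuousLinearMap.coe_fst']
  rw [pair_fderiv2 _ h1, pair_symm _ h1]
  exact pair_fderiv2 _ h1 _ _ _

section
variable {V : Type*} [Fintype V] [DecidableEq V] (G : SimpleGraph V) [DecidableRel G.Adj]

theorem ms_pd (f : V → ℝ → ℝ) (g : V → V → ℝ → ℝ → ℝ)
    (hf_smooth : ∀ i, ContDiff ℝ 2 (f i))
    (hg_smooth : ∀ i j, G.Adj i j → ContDiff ℝ 2 (fun q : ℝ × ℝ => g i j q.1 q.2))
    (hg_symm : ∀ i j, G.Adj i j → ∀ a b : ℝ, g i j a b = g j i b a) (j : V) :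
    pd (fun x => (∑ i, f i (x i)) +
      (1 / 2) * ∑ i, ∑ j ∈ G.neighborFinset i, g i j (x i) (x j)) j =
    fun x => deriv (f j) (x j) + ∑ u ∈ G.neighborFinset j, kfun g u j (x u, x j) := by
  funext x
  unfold pd
  have hu : Function.update x j (x j) = x := Function.update_eq_self j x
  have h1 : ∀ i, HasDerivAt (fun y => f i (Function.update x j y i))
      (deriv (f i) (x i) * if i = j then 1 else 0) (x j) := by
    intro i
    have h := ((hf_smooth i).differentiable two_ne_zero (Function.update x j (x j) i)).hasDerivAt
    have := HasDerivAt.comp (h := fun y => Function.update x j y i) (x j) h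
      (hasDerivAt_update_coord x j i (x j))
    rw [hu] at this
    exact this
  have h2 : ∀ i, ∀ l ∈ G.neighborFinset i,
      HasDerivAt (fun y => g i l (Function.update x j y i) (Function.update x j y l))
      (kfun g l i (x l, x i) * (if i = j then 1 else 0) +
        kfun g i l (x i, x l) * (if l = j then 1 else 0)) (x j) := by
    intro i l hl
    have hil : G.Adj i l := by simpa using hl
    have h := kfun_hg g i l (hg_smooth i l hil) (fun a b => hg_symm l i hil.symm a b)
      (Function.update x j (x j) i, Function.update x j (x j) l)
    have := HasFDerivAt.comp_hasDerivAt
      (f := fun y => (Function.update x j y i, Function.update x j y l)) (x j) h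
      ((hasDerivAt_update_coord x j i (x j)).prodMk (hasDerivAt_update_coord x j l (x j)))
    rw [hu] at this
    simpa [Function.comp_def] using this
  have h3 := (HasDerivAt.fun_sum (u := univ) fun i _ => h1 i).add
    ((HasDerivAt.fun_sum (u := univ) fun i _ =>
      HasDerivAt.fun_sum fun l hl => h2 i l hl).const_mul (1 / 2 : ℝ))
  refine h3.deriv.trans ?_
  have e1 : ∑ i, ∑ l ∈ G.neighborFinset i, kfun g l i (x l, x i) * (if i = j then (1 : ℝ) else 0)
      = ∑ u ∈ G.neighborFinset j, kfun g u j (x u, x j) := by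
    simp_rw [← Finset.sum_mul]
    simp
  have e2 : ∑ i, ∑ l ∈ G.neighborFinset i, kfun g i l (x i, x l) * (if l = j then (1 : ℝ) else 0)
      = ∑ u ∈ G.neighborFinset j, kfun g u j (x u, x j) := by
    have : ∀ i, ∑ l ∈ G.neighborFinset i, kfun g i l (x i, x l) * (if l = j then (1 : ℝ) else 0) =
        if i ∈ G.neighborFinset j then kfun g i j (x i, x j) else 0 := by
      intro i
      simp [G.adj_comm]
    rw [Finset.sum_congr rfl fun i _ => this i, ← Finset.sum_filter]
    congr 1
    ext; simp
  simp_rw [Finset.sum_add_distrib]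
  rw [e1, e2]
  simp
  ring

theorem ms_pd2 (f : V → ℝ → ℝ) (g : V → V → ℝ → ℝ → ℝ)
    (hf_smooth : ∀ i, ContDiff ℝ 2 (f i))
    (hg_smooth : ∀ i j, G.Adj i j → ContDiff ℝ 2 (fun q : ℝ × ℝ => g i j q.1 q.2))
    (i j : V) (x : V → ℝ) :
    pd (fun x => deriv (f j) (x j) + ∑ u ∈ G.neighborFinset j, kfun g u j (x u, x j)) i x =
      deriv (deriv (f j)) (x j) * (if j = i then 1 else 0) +
      ∑ u ∈ G.neighborFinset j, (fderiv ℝ (kfun g u j) (x u, x j) (1, 0) * (if u = i then 1 else 0)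
        + fderiv ℝ (kfun g u j) (x u, x j) (0, 1) * (if j = i then 1 else 0)) := by
  unfold pd
  have hu : Function.update x i (x i) = x := Function.update_eq_self i x
  have hd1 : ContDiff ℝ 1 (deriv (f j)) := by
    have : ContDiff ℝ (1 + 1) (f j) := by norm_num; exact hf_smooth j
    exact (contDiff_succ_iff_deriv.1 this).2.2
  have h1 : HasDerivAt (fun y => deriv (f j) (Function.update x i y j))
      (deriv (deriv (f j)) (x j) * if j = i then 1 else 0) (x i) := by
    have h := (hd1.differentiable one_ne_zero (Function.update x i (x i) j)).hasDerivAt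
    have := HasDerivAt.comp (h := fun y => Function.update x i y j) (x i) h
      (hasDerivAt_update_coord x i j (x i))
    rw [hu] at this
    exact this
  have h2 : ∀ u ∈ G.neighborFinset j,
      HasDerivAt (fun y => kfun g u j (Function.update x i y u, Function.update x i y j))
      (fderiv ℝ (kfun g u j) (x u, x j) (1, 0) * (if u = i then 1 else 0)
        + fderiv ℝ (kfun g u j) (x u, x j) (0, 1) * (if j = i then 1 else 0)) (x i) := by
    intro u hl
    have hil : G.Adj u j := by simpa [G.adj_comm] using hl
    have h := ((pair_contDiff _ (hg_smooth u j hil) (0, 1)).differentiable one_ne_zero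
      (Function.update x i (x i) u, Function.update x i (x i) j)).hasFDerivAt
    have := HasFDerivAt.comp_hasDerivAt
      (f := fun y => (Function.update x i y u, Function.update x i y j)) (x i) h
      ((hasDerivAt_update_coord x i u (x i)).prodMk (hasDerivAt_update_coord x i j (x i)))
    rw [hu] at this
    refine this.congr_deriv ?_
    have hsplit : ∀ a b : ℝ, ((a, b) : ℝ × ℝ) = a • (1, 0) + b • (0, 1) := by
      intro a b; simp
    rw [hsplit (if u = i then 1 else 0), map_add, map_smul, map_smul, smul_eq_mul, smul_eq_mul,
      mul_comm, mul_comm (if j = i then (1 : ℝ) else 0)]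
    rfl
  exact (h1.add (HasDerivAt.fun_sum h2)).deriv

end


/-- **Sensitivity of the min-sum estimates to the perturbation** (Lemma 3 of
Moallemi–Van Roy).  For a `(λ,w)`-scaled diagonally dominant pairwise separable convex
program, the perturbed estimate `p ↦ x⁽ᵗ⁾_r(p)` is differentiable and
`|∂x⁽ᵗ⁾_r(p)/∂p_{u→v}| ≤ K λᵗ/(1-λ)` for every `p`, `r`, `(u,v) ∈ E⃗` and `t ≥ 0`. -/
theorem minSum_perturbed_sensitivity
    {V : Type*} [Fintype V] [DecidableEq V] [Nonempty V]
    (G : SimpleGraph V) [DecidableRel G.Adj]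
    -- the factors of the pairwise separable convex program
    (f : V → ℝ → ℝ) (g : V → V → ℝ → ℝ → ℝ)
    (hf_sconv : ∀ i, StrictConvexOn ℝ Set.univ (f i))
    (hf_coer : ∀ i, Tendsto (f i) (cocompact ℝ) atTop)
    (hf_smooth : ∀ i, ContDiff ℝ 2 (f i))
    (hg_conv : ∀ i j, G.Adj i j → ConvexOn ℝ Set.univ (fun q : ℝ × ℝ => g i j q.1 q.2))
    (hg_smooth : ∀ i j, G.Adj i j → ContDiff ℝ 2 (fun q : ℝ × ℝ => g i j q.1 q.2))
    (hg_symm : ∀ i j, G.Adj i j → ∀ a b : ℝ, g i j a b = g j i b a)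
    -- the objective function
    (F : (V → ℝ) → ℝ)
    (hF : F = fun x => (∑ i, f i (x i)) +
      (1 / 2) * ∑ i, ∑ j ∈ G.neighborFinset i, g i j (x i) (x j))
    -- `M = min_i inf_x ∂²F/∂x_i²(x) > 0`
    (M : ℝ) (hM : 0 < M) (hMle : ∀ (i : V) (x : V → ℝ), M ≤ pd2 F i i x)
    -- scaled diagonal dominance
    (lam : ℝ) (w : V → ℝ) (hlam0 : 0 < lam) (hlam1 : lam < 1) (hw : ∀ i, 0 < w i)
    (hdd : ∀ (i : V) (x : V → ℝ),
      ∑ j ∈ univ.erase i, w j * |pd2 F i j x| ≤ lam * w i * pd2 F i i x)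
    -- the initial messages and the initialization assumption
    (J0 : V → V → ℝ → ℝ)
    (hJ0smooth : ∀ i j, G.Adj i j → ContDiff ℝ 2 (J0 i j))
    (hJ0conv : ∀ i j, G.Adj i j → ∃ z : ℝ, ∀ xj : ℝ,
      deriv (deriv (fun b => g i j z b)) xj ≤ deriv (deriv (J0 i j)) xj)
    -- the perturbed min-sum messages and their update rule (minima are attained)
    (JP : ℕ → V → V → (EdgeDir G → ℝ) → ℝ → ℝ)
    (hJP0 : ∀ (i j : V) (h : G.Adj i j) (p : EdgeDir G → ℝ) (xj : ℝ),
      JP 0 i j p xj = J0 i j xj + p ⟨(i, j), h⟩ * xj)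
    (hJPrec : ∀ (t : ℕ) (i j : V), G.Adj i j → ∀ (p : EdgeDir G → ℝ) (xj : ℝ),
      IsLeast (Set.range fun y : ℝ =>
          f i y + g i j y xj + ∑ u ∈ (G.neighborFinset i).erase j, JP t u i p y)
        (JP (t + 1) i j p xj))
    -- the perturbed estimates: unique minimizers of the local objectives `b⁽ᵗ⁾_i(·, p)`
    (xEstP : ℕ → V → (EdgeDir G → ℝ) → ℝ)
    (hxEstP : ∀ (t : ℕ) (i : V) (p : EdgeDir G → ℝ) (y : ℝ), y ≠ xEstP t i p →
      f i (xEstP t i p) + ∑ u ∈ G.neighborFinset i, JP t u i p (xEstP t i p) <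
        f i y + ∑ u ∈ G.neighborFinset i, JP t u i p y) :
    ∀ (t : ℕ) (r : V),
      Differentiable ℝ (xEstP t r) ∧
      ∀ (p : EdgeDir G → ℝ) (e : EdgeDir G),
        |deriv (fun s => xEstP t r (Function.update p e s)) (p e)| ≤
          ((1 / M) * (univ.sup' univ_nonempty w / univ.inf' univ_nonempty w)) *
            (lam ^ t / (1 - lam)) := by
  subst hF
  have hpd := ms_pd G f g hf_smooth hg_smooth hg_symm
  have hself : ∀ i (z : V → ℝ) (y : ℝ), ∀ u ∈ G.neighborFinset i,
      Function.update z i y u = z u := by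
    intro i z y u hu
    have : G.Adj i u := by simpa using hu
    exact Function.update_of_ne this.ne' _ _
  have hdiag : ∀ i (z : V → ℝ) (y : ℝ), pd2 (fun x => (∑ i, f i (x i)) +
      (1 / 2) * ∑ i, ∑ j ∈ G.neighborFinset i, g i j (x i) (x j)) i i (Function.update z i y) =
      deriv (deriv (f i)) y +
        ∑ u ∈ G.neighborFinset i, fderiv ℝ (kfun g u i) (z u, y) (0, 1) := by
    intro i z y
    unfold pd2
    rw [hpd, ms_pd2 G f g hf_smooth hg_smooth]
    simp only [if_true, mul_one, Function.update_self]
    congr 1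
    refine Finset.sum_congr rfl fun u hu => ?_
    have hne : u ≠ i := by
      have : G.Adj i u := by simpa using hu
      exact this.ne'
    rw [hself i z y u hu]
    simp [hne]
  have hoff : ∀ i j, G.Adj i j → ∀ (z : V → ℝ) (y : ℝ), pd2 (fun x => (∑ i, f i (x i)) +
      (1 / 2) * ∑ i, ∑ j ∈ G.neighborFinset i, g i j (x i) (x j)) i j (Function.update z i y) =
      fderiv ℝ (kfun g j i) (z j, y) (1, 0) := by
    intro i j hij z y
    unfold pd2
    rw [hpd, ms_pd2 G f g hf_smooth hg_smooth]
    have hne : j ≠ i := hij.ne'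
    simp only [hne, if_false, mul_zero, add_zero, zero_add]
    simp only [mul_ite, mul_one, mul_zero]
    rw [Finset.sum_ite_eq', if_pos (by simpa using hij.symm), Function.update_self,
      Function.update_of_ne hne]
    exact kfun_hsym g i j (hg_smooth i j hij) (fun a b => hg_symm j i hij.symm a b) y (z j)
  have hinf : 0 < univ.inf' univ_nonempty w := by
    rw [Finset.lt_inf'_iff]; exact fun i _ => hw i
  have h1l : 0 < 1 - lam := by linarith
  have hD : MSData G f (fun i => deriv (f i)) g (kfun g) M lam (univ.inf' univ_nonempty w)
      (1 / (univ.inf' univ_nonempty w * M * (1 - lam))) w :=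
    { hf := fun i y => ((hf_smooth i).differentiable two_ne_zero y).hasDerivAt
      hf' := by
        intro i
        have : ContDiff ℝ (1 + 1) (f i) := by norm_num; exact hf_smooth i
        exact (contDiff_succ_iff_deriv.1 this).2.2
      hg := fun i j hij => kfun_hg g i j (hg_smooth i j hij) (hg_symm j i hij.symm)
      hk := fun i j hij => pair_contDiff _ (hg_smooth i j hij) (0, 1)
      hsym := fun i j hij => kfun_hsym g i j (hg_smooth i j hij) (hg_symm j i hij.symm)
      hM := hM
      hl0 := hlam0
      hl1 := hlam1
      hwm := hinf
      hw := fun i => Finset.inf'_le _ (mem_univ i)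
      hK0 := by positivity
      hK := by
        rw [one_div, inv_mul_cancel₀]
        positivity
      hMle := by
        intro i z y
        rw [← hdiag]; exact hMle _ _
      hdd := by
        intro i z y
        rw [← hdiag]
        refine le_trans ?_ (hdd i (Function.update z i y))
        calc ∑ u ∈ G.neighborFinset i, w u * |fderiv ℝ (kfun g u i) (z u, y) (1, 0)|
            = ∑ u ∈ G.neighborFinset i, w u * |pd2 (fun x => (∑ i, f i (x i)) +
                (1 / 2) * ∑ i, ∑ j ∈ G.neighborFinset i, g i j (x i) (x j)) i u
                (Function.update z i y)| := by
              refine Finset.sum_congr rfl fun u hu => ?_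
              rw [hoff i u (by simpa using hu)]
          _ ≤ _ := by
              refine Finset.sum_le_sum_of_subset_of_nonneg ?_ ?_
              · intro u hu
                have : G.Adj i u := by simpa using hu
                simp [this.ne']
              · intro u _ _
                exact mul_nonneg (hw u).le (abs_nonneg _) }
  have hInv : ∀ t i j, G.Adj i j → ∃ m, MSInv (kfun g) lam
      (1 / (univ.inf' univ_nonempty w * M * (1 - lam))) w t i j (JP t i j) m := by
    intro t
    induction t with
    | zero =>
      intro i j hij
      refine ms_zero hD i j hij (J0 i j) (hJ0smooth i j hij) ?_ _ (hJP0 i j hij)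
      obtain ⟨z, hz⟩ := hJ0conv i j hij
      refine ⟨z, fun x => ?_⟩
      have e1 : deriv (fun b => g i j z b) = fun b => kfun g i j (z, b) := by
        funext b
        have := HasFDerivAt.comp_hasDerivAt (f := fun b : ℝ => (z, b)) b (hD.hg i j hij (z, b))
          ((hasDerivAt_const b z).prodMk (hasDerivAt_id b))
        have h2 := this.deriv
        simpa [Function.comp_def] using h2
      have e2 : deriv (fun b => kfun g i j (z, b)) x = fderiv ℝ (kfun g i j) (z, x) (0, 1) :=
        (HasFDerivAt.comp_hasDerivAt (f := fun b : ℝ => (z, b)) x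
          ((hD.hk i j hij).differentiable one_ne_zero (z, x)).hasFDerivAt
          ((hasDerivAt_const x z).prodMk (hasDerivAt_id x))).deriv
      have := hz x
      rwa [e1, e2] at this
    | succ t ih =>
      intro i j hij
      refine ms_step hD t i j hij (fun u => JP t u i) ?_ _ (hJPrec t i j hij)
      intro u hu
      have : G.Adj i u := by simpa using Finset.mem_of_mem_erase hu
      exact ih u i this.symm
  intro t r
  obtain ⟨hdiff, hbd⟩ := ms_root hD t r (fun u => JP t u r) (by
      intro u hu
      have : G.Adj r u := by simpa using hu
      exact hInv t u r this.symm) (xEstP t r) (by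
      intro p y
      by_cases h : y = xEstP t r p
      · rw [h]
      · exact (hxEstP t r p y h).le)
  refine ⟨hdiff, fun p e => ?_⟩
  have hc : HasDerivAt (fun s => xEstP t r (Function.update p e s))
      (fderiv ℝ (xEstP t r) p (Pi.single e 1)) (p e) := by
    refine HasFDerivAt.comp_hasDerivAt (f := fun s => Function.update p e s) (p e) ?_
      (hasDerivAt_update p e (p e))
    rw [Function.update_eq_self]
    exact (hdiff p).hasFDerivAt
  rw [hc.deriv]
  refine (hbd p e).trans ?_
  have hsup : w r ≤ univ.sup' univ_nonempty w := Finset.le_sup' _ (mem_univ r)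
  calc 1 / (univ.inf' univ_nonempty w * M * (1 - lam)) * lam ^ t * w r
      ≤ 1 / (univ.inf' univ_nonempty w * M * (1 - lam)) * lam ^ t * univ.sup' univ_nonempty w :=
        mul_le_mul_of_nonneg_left hsup (by positivity)
    _ = _ := by field_simp
end
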